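/- Let x* be a local minimizer of (NLP) at which MFCQ holds. Let r be the rank of J(x*) and assume that the rank of J(x) is at most r+1 for every x in some neighborhood of x*. Assume the smooth-SVD condition: there exist functions x ↦ U(x) ∈ ℝ^{(m+q)×(m+q)}, x ↦ Σ(x) ∈ ℝ^{(m+q)×n}, x ↦ V(x) ∈ ℝ^{n×n}, differentiable in a neighborhood of x*, such that J(x) = U(x)Σ(x)V(x)ᵀ, Σ(x) is diagonal with diagonal entries σ₁(x),…,σ_k(x) where k := min{m+q, n} and σ_i(x) = 0 whenever i exceeds the rank of J(x), and the columns of U(x*) and the columns of V(x*) are non-zero and pairwise orthogonal. Assume in addition that GSCS holds at x*. Then there exists a Lagrange multiplier (λ,μ) ∈ Λ(x*) such that dᵀ∇²ₓₓL(x*,λ,μ)d ≥ 0 for all d ∈ C(x*) (SSOC holds at x*). -/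

import Mathlib

open scoped BigOperators Pointwise
open Matrix

attribute [local instance] Classical.propDecidable

noncomputable section

/-- The gradient vector of `φ` at `x` (the vector of partial derivatives). -/
def gradVec {n : ℕ} (φ : (Fin n → ℝ) → ℝ) (x : Fin n → ℝ) : Fin n → ℝ :=
  fun k => fderiv ℝ φ x (Pi.single k 1)

/-- The quadratic form `d ↦ dᵀ ∇²φ(x) d` of the Hessian of `φ` at `x`. -/
def hessQ {n : ℕ} (φ : (Fin n → ℝ) → ℝ) (x d : Fin n → ℝ) : ℝ :=
  iteratedFDeriv ℝ 2 φ x ![d, d]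

/-- Feasibility for the problem (NLP). -/
def Feas {n m p : ℕ} (h : Fin m → (Fin n → ℝ) → ℝ) (g : Fin p → (Fin n → ℝ) → ℝ)
    (x : Fin n → ℝ) : Prop :=
  (∀ i, h i x = 0) ∧ ∀ j, g j x ≤ 0

/-- The Lagrangian of (NLP). -/
def Lagr {n m p : ℕ} (f : (Fin n → ℝ) → ℝ) (h : Fin m → (Fin n → ℝ) → ℝ)
    (g : Fin p → (Fin n → ℝ) → ℝ) (lam : Fin m → ℝ) (mu : Fin p → ℝ) (x : Fin n → ℝ) : ℝ :=
  f x + ∑ i, lam i * h i x + ∑ j, mu j * g j x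

/-- `(lam, mu)` is a Lagrange multiplier at `xs`, i.e. `(lam, mu) ∈ Λ(xs)`. -/
def IsLagMult {n m p : ℕ} (f : (Fin n → ℝ) → ℝ) (h : Fin m → (Fin n → ℝ) → ℝ)
    (g : Fin p → (Fin n → ℝ) → ℝ) (xs : Fin n → ℝ) (lam : Fin m → ℝ) (mu : Fin p → ℝ) : Prop :=
  (∀ j, 0 ≤ mu j) ∧ fderiv ℝ (Lagr f h g lam mu) xs = 0 ∧ ∀ j, mu j * g j xs = 0

/-- The Mangasarian-Fromovitz constraint qualification at `xs`. -/
def MFCQ {n m p : ℕ} (h : Fin m → (Fin n → ℝ) → ℝ) (g : Fin p → (Fin n → ℝ) → ℝ)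
    (xs : Fin n → ℝ) : Prop :=
  LinearIndependent ℝ (fun i : Fin m => fderiv ℝ (h i) xs) ∧
  ∃ d : Fin n → ℝ, (∀ i, fderiv ℝ (h i) xs d = 0) ∧
    ∀ j, g j xs = 0 → fderiv ℝ (g j) xs d < 0

/-- Membership in the critical cone `C(xs)`. -/
def critCone {n m p : ℕ} (f : (Fin n → ℝ) → ℝ) (h : Fin m → (Fin n → ℝ) → ℝ)
    (g : Fin p → (Fin n → ℝ) → ℝ) (xs d : Fin n → ℝ) : Prop :=
  fderiv ℝ f xs d = 0 ∧ (∀ i, fderiv ℝ (h i) xs d = 0) ∧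
    ∀ j, g j xs = 0 → fderiv ℝ (g j) xs d ≤ 0

/-- Membership in the critical subspace `S(xs)`. -/
def critSub {n m p : ℕ} (h : Fin m → (Fin n → ℝ) → ℝ) (g : Fin p → (Fin n → ℝ) → ℝ)
    (xs d : Fin n → ℝ) : Prop :=
  (∀ i, fderiv ℝ (h i) xs d = 0) ∧ ∀ j, g j xs = 0 → fderiv ℝ (g j) xs d = 0

/-- The Jacobian matrix `J(x)` of equality and active inequality constraints
(activity taken at the base point `xs`). -/
def Jac {n m p : ℕ} (h : Fin m → (Fin n → ℝ) → ℝ) (g : Fin p → (Fin n → ℝ) → ℝ)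
    (xs x : Fin n → ℝ) : Matrix (Fin m ⊕ {j : Fin p // g j xs = 0}) (Fin n) ℝ :=
  Matrix.of fun i k =>
    Sum.elim (fun i' => fderiv ℝ (h i') x (Pi.single k 1))
      (fun j' => fderiv ℝ (g j'.1) x (Pi.single k 1)) i

/-- A first-order cone: the (direct) sum of a linear subspace and a ray. -/
def IsFirstOrderCone {n : ℕ} (K : Set (Fin n → ℝ)) : Prop :=
  ∃ (W : Submodule ℝ (Fin n → ℝ)) (d0 : Fin n → ℝ),
    K = {x | ∃ w ∈ W, ∃ r : ℝ, 0 ≤ r ∧ x = w + r • d0}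

/-- The rank of a family of vectors: the dimension of its linear span. -/
def famRank {ι : Type*} {n : ℕ} (v : ι → (Fin n → ℝ)) : ℕ :=
  Module.finrank ℝ (Submodule.span ℝ (Set.range v))

/-- The smooth singular value decomposition assumption (Assumption 1 of the paper) for the
Jacobian `J(x)` near `xs`, stated via an enumeration `e` of the rows:
`J(x) = U(x) Σ(x) V(x)ᵀ` on a neighborhood of `xs`, with all entries differentiable there,
`Σ(x)` diagonal with vanishing diagonal entries beyond the rank of `J(x)`, and the columns
of `U(xs)` and of `V(xs)` non-zero and pairwise orthogonal. -/
def SmoothSVD {n m p : ℕ} (h : Fin m → (Fin n → ℝ) → ℝ) (g : Fin p → (Fin n → ℝ) → ℝ)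
    (xs : Fin n → ℝ)
    (e : (Fin m ⊕ {j : Fin p // g j xs = 0}) ≃
      Fin (m + Fintype.card {j : Fin p // g j xs = 0})) : Prop :=
  ∃ O ∈ nhds xs,
    ∃ (U : (Fin n → ℝ) →
        Matrix (Fin (m + Fintype.card {j : Fin p // g j xs = 0}))
          (Fin (m + Fintype.card {j : Fin p // g j xs = 0})) ℝ)
      (S : (Fin n → ℝ) →
        Matrix (Fin (m + Fintype.card {j : Fin p // g j xs = 0})) (Fin n) ℝ)
      (V : (Fin n → ℝ) → Matrix (Fin n) (Fin n) ℝ),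
      (∀ i j', DifferentiableOn ℝ (fun x => U x i j') O) ∧
      (∀ i k, DifferentiableOn ℝ (fun x => S x i k) O) ∧
      (∀ k k', DifferentiableOn ℝ (fun x => V x k k') O) ∧
      (∀ x ∈ O, ∀ i k, Jac h g xs x (e.symm i) k = (U x * S x * (V x)ᵀ) i k) ∧
      (∀ x ∈ O, ∀ (i : Fin (m + Fintype.card {j : Fin p // g j xs = 0})) (k : Fin n),
        (i : ℕ) ≠ (k : ℕ) → S x i k = 0) ∧
      (∀ x ∈ O, ∀ (i : Fin (m + Fintype.card {j : Fin p // g j xs = 0})) (k : Fin n),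
        (i : ℕ) = (k : ℕ) → (Jac h g xs x).rank ≤ (i : ℕ) → S x i k = 0) ∧
      (∀ a, (fun i => U xs i a) ≠ 0) ∧
      (∀ a b, a ≠ b → ∑ i, U xs i a * U xs i b = 0) ∧
      (∀ a, (fun k => V xs k a) ≠ 0) ∧
      (∀ a b, a ≠ b → ∑ k, V xs k a * V xs k b = 0)

/-- The generalized strict complementary slackness condition at `xs`: at most one active
index has zero multiplier for every Lagrange multiplier. -/
def GSCS {n m p : ℕ} (f : (Fin n → ℝ) → ℝ) (h : Fin m → (Fin n → ℝ) → ℝ)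
    (g : Fin p → (Fin n → ℝ) → ℝ) (xs : Fin n → ℝ) : Prop :=
  {j : Fin p | g j xs = 0 ∧
    ∀ (lam : Fin m → ℝ) (mu : Fin p → ℝ), IsLagMult f h g xs lam mu → mu j = 0}.Subsingleton

/-
For a critical direction `d`, minimality along parabolic feasible arcs and Lagrange duality yield a
multiplier `η ∈ Λ` with `∇²L(η)[d, d] ≥ 0`, where `η` depends on `d`; under MFCQ, `Λ` is convex and
compact. A single multiplier for all `d` comes from a minimax argument, once the set of functions
`η ↦ ∇²L(η)[d, d]` on `Λ` is known to be closed under addition up to domination.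

A difference of two multipliers is a left null vector of `J(xs)`, so differentiating the smooth SVD
in a direction `v ∈ ker J(xs)` only sees the diagonal entry of `Σ` with index `r + 1`. Hence
`∇²L(η)[d, v] = B(d, v) + ρ(η) w(d) l(v)`. By GSCS the critical cone is a half-space `{ξ ≤ 0}` of a
subspace `T` on which `ξ = 0` cuts out `ker J(xs)`. After a rotation of a pair `d₁, d₂ ∈ T` one
vector lies in `ker ξ`, and the formula then produces a `z ∈ T` with
`∇²L(η)[z, z] ≤ ∇²L(η)[d₁, d₁] + ∇²L(η)[d₂, d₂]` for all `η ∈ Λ`.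
-/
section Duality

theorem pi_surjective_of_linearIndependent {𝕜 E ι : Type*} [Field 𝕜] [AddCommGroup E] [Module 𝕜 E]
    [Finite ι] {A : ι → Module.Dual 𝕜 E} (hA : LinearIndependent 𝕜 A) :
    Function.Surjective (LinearMap.pi A) := by
  have := Fintype.ofFinite ι
  rw [← LinearMap.dualMap_injective_iff, injective_iff_map_eq_zero]
  intro ψ hψ
  have : ∑ i, ψ (fun j => if i = j then 1 else 0) • A i = 0 := by
    rw [← hψ]
    ext v
    simp [ψ.pi_apply_eq_sum_univ (LinearMap.pi A v), mul_comm]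
  have := Fintype.linearIndependent_iff.1 hA _ this
  exact LinearMap.ext fun v => by simp [ψ.pi_apply_eq_sum_univ v, this]

theorem exists_nonneg_weights_of_neg_of_lt {κ : Type*} [Fintype κ] (Φ : Module.Dual ℝ (κ → ℝ))
    {y₀ : κ → ℝ} (hΦ : ∀ y, (∀ k, y k < y₀ k) → Φ y < 0) :
    ∃ w : κ → ℝ, (∀ k, 0 ≤ w k) ∧ ∀ y, Φ y = ∑ k, w k * y k := by
  let w : κ → ℝ := fun k => Φ fun j => if k = j then 1 else 0
  refine ⟨w, fun k => ?_, fun y => by simpa [w, mul_comm] using Φ.pi_apply_eq_sum_univ y⟩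
  by_contra! hk
  let c : ℝ := Φ fun j => y₀ j - 1
  have key := hΦ ((fun j => y₀ j - 1) - (|c| / -w k) • fun j => if k = j then 1 else 0) fun j => by
    have : 0 ≤ |c| / -w k := div_nonneg (abs_nonneg c) (neg_pos.2 hk).le
    simp only [Pi.sub_apply, Pi.smul_apply, smul_eq_mul]
    split_ifs <;> linarith
  rw [map_sub, map_smul, smul_eq_mul, div_mul_eq_mul_div, div_neg,
    mul_div_cancel_right₀ _ hk.ne] at key
  linarith [neg_abs_le c]

/-- The theorem of the alternative of Fan, Glicksberg and Hoffman. -/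
theorem exists_weights_sum_nonpos_of_concaveOn {X κ : Type*} [AddCommGroup X] [Module ℝ X]
    [Fintype κ] {K : Set X} (hK : K.Nonempty) {φ : κ → X → ℝ} (hφ : ∀ k, ConcaveOn ℝ K (φ k))
    (hneg : ∀ x ∈ K, ∃ k, φ k x ≤ 0) :
    ∃ w : κ → ℝ, (∀ k, 0 ≤ w k) ∧ w ≠ 0 ∧ ∀ x ∈ K, ∑ k, w k * φ k x ≤ 0 := by
  obtain ⟨x₀, hx₀⟩ := hK
  let C : Set (κ → ℝ) := {y | ∃ x ∈ K, ∀ k, y k < φ k x}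
  have convex_C : Convex ℝ C := by
    rintro y ⟨x, hx, hy⟩ y' ⟨x', hx', hy'⟩ a b ha hb hab
    exact ⟨a • x + b • x', (hφ (hneg x hx).choose).1 hx hx' ha hb hab, fun k =>
      ((hφ k).convex_strict_hypograph (x := (x, y k)) ⟨hx, hy k⟩ (y := (x', y' k)) ⟨hx', hy' k⟩
        ha hb hab).2⟩
  have open_C : IsOpen C := by
    have : C = ⋃ x ∈ K, Set.univ.pi fun k => Set.Iio (φ k x) := by ext y; simp [C]
    rw [this]
    exact isOpen_biUnion fun x _ => isOpen_set_pi Set.finite_univ fun k _ => isOpen_Iio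
  have zero_notMem : (0 : κ → ℝ) ∉ C := by
    rintro ⟨x, hx, hpos⟩
    obtain ⟨k, hk⟩ := hneg x hx
    exact (hpos k).not_ge hk
  obtain ⟨Φ, hΦ⟩ := geometric_hahn_banach_open_point convex_C open_C zero_notMem
  have Φ_neg {x : X} (hx : x ∈ K) (y : κ → ℝ) (hy : ∀ k, y k < φ k x) : Φ y < 0 := by
    simpa using hΦ y ⟨x, hx, hy⟩
  obtain ⟨w, w_nonneg, Φ_eq⟩ := exists_nonneg_weights_of_neg_of_lt Φ.toLinearMap (Φ_neg hx₀)
  simp only [ContinuousLinearMap.coe_coe] at Φ_eq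
  refine ⟨w, w_nonneg, ?_, fun x hx => ?_⟩
  · rintro hw
    simpa [Φ_eq, hw] using Φ_neg hx₀ (fun k => φ k x₀ - 1) fun k => sub_one_lt _
  · rw [← Φ_eq]
    have lim : Filter.Tendsto (fun ε : ℝ => Φ fun k => φ k x - ε) (nhdsWithin 0 (Set.Ioi 0))
        (nhds (Φ fun k => φ k x)) := by
      refine ((Continuous.tendsto' ?_ 0 _ (by simp))).mono_left nhdsWithin_le_nhds
      fun_prop
    exact le_of_tendsto lim <| eventually_mem_nhdsWithin.mono fun ε hε =>
      (Φ_neg hx _ fun k => sub_lt_self _ hε).le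

theorem exists_multipliers_of_convexOn_of_slater {E κ : Type*} [AddCommGroup E] [Module ℝ E]
    [Fintype κ] {K : Set E} {φ : E → ℝ} {ψ : κ → E → ℝ} (hφ : ConvexOn ℝ K φ)
    (hψ : ∀ k, ConvexOn ℝ K (ψ k)) (hslater : ∃ z ∈ K, ∀ k, ψ k z < 0)
    (hopt : ∀ z ∈ K, (∀ k, ψ k z < 0) → 0 ≤ φ z) :
    ∃ mu : κ → ℝ, (∀ k, 0 ≤ mu k) ∧ ∀ z ∈ K, 0 ≤ φ z + ∑ k, mu k * ψ k z := by
  obtain ⟨z₀, hz₀, z₀_slater⟩ := hslater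
  obtain ⟨w, w_nonneg, w_ne, hw⟩ := exists_weights_sum_nonpos_of_concaveOn ⟨z₀, hz₀⟩
    (φ := fun o : Option κ => o.elim (-φ) fun k => -ψ k)
    (fun | none => hφ.neg | some k => (hψ k).neg) fun z hz => by
      by_contra! hpos
      exact (hpos none).not_ge <| neg_nonpos.2 <| hopt z hz fun k => neg_pos.1 (hpos (some k))
  simp only [Fintype.sum_option, Option.elim, Pi.neg_apply, mul_neg, Finset.sum_neg_distrib]
    at hw
  have w_none_pos : 0 < w none := by
    refine (w_nonneg none).lt_of_ne' fun h0 => ?_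
    obtain ⟨k, hk⟩ : ∃ k, w (some k) ≠ 0 := by
      by_contra! hzero
      exact w_ne (funext fun | none => h0 | some k => hzero k)
    have : ∑ j, w (some j) * ψ j z₀ < 0 :=
      Finset.sum_neg' (fun j _ => mul_nonpos_of_nonneg_of_nonpos (w_nonneg _) (z₀_slater j).le)
        ⟨k, Finset.mem_univ k, mul_neg_of_pos_of_neg ((w_nonneg _).lt_of_ne' hk) (z₀_slater k)⟩
    linarith [hw z₀ hz₀, mul_eq_zero_of_left h0 (φ z₀)]
  refine ⟨fun k => w (some k) / w none, fun k => div_nonneg (w_nonneg _) w_none_pos.le,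
    fun z hz => nonneg_of_mul_nonneg_right (a := w none) ?_ w_none_pos⟩
  simp only [mul_add, Finset.mul_sum, ← mul_assoc, mul_div_cancel₀ _ w_none_pos.ne']
  linarith [hw z hz]

theorem exists_multipliers_of_nonneg_on_affine {E ι : Type*} [AddCommGroup E] [Module ℝ E]
    [Fintype ι] {A : ι → Module.Dual ℝ E} {a : ι → ℝ} {ψ : Module.Dual ℝ E} {c : ℝ}
    (hfeas : ∃ z, ∀ i, A i z + a i = 0) (hψ : ∀ z, (∀ i, A i z + a i = 0) → 0 ≤ ψ z + c) :
    ∃ lam : ι → ℝ, ψ + ∑ i, lam i • A i = 0 ∧ 0 ≤ c + ∑ i, lam i * a i := by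
  obtain ⟨z₀, hz₀⟩ := hfeas
  have ker_le : ⨅ i, (A i).ker ≤ ψ.ker := fun v hv => by
    simp only [Submodule.mem_iInf, LinearMap.mem_ker] at hv ⊢
    by_contra hne
    have := hψ (z₀ - ((ψ z₀ + c + 1) / ψ v) • v) fun i => by simpa [hv i] using hz₀ i
    rw [map_sub, map_smul, smul_eq_mul, div_mul_cancel₀ _ hne] at this
    linarith
  obtain ⟨lam, hlam⟩ := (Submodule.mem_span_range_iff_exists_fun ℝ).1 <|
    Submodule.neg_mem _ (mem_span_of_iInf_ker_le_ker ker_le)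
  refine ⟨lam, by rw [hlam, add_neg_cancel], ?_⟩
  have ψ_eq : ∑ i, lam i * A i z₀ = -ψ z₀ := by simpa using DFunLike.congr_fun hlam z₀
  have : ∑ i, lam i * a i = ψ z₀ := by
    rw [← neg_eq_iff_eq_neg.2 ψ_eq, ← Finset.sum_neg_distrib]
    exact Finset.sum_congr rfl fun i _ => by linear_combination lam i * hz₀ i
  linarith [hψ z₀ hz₀]

theorem exists_multipliers_of_slater {E ι κ : Type*} [AddCommGroup E] [Module ℝ E] [Fintype ι]
    [Fintype κ] {A : ι → Module.Dual ℝ E} {B : κ → Module.Dual ℝ E} {ℓ : Module.Dual ℝ E}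
    {a : ι → ℝ} {b : κ → ℝ} {c : ℝ}
    (hslater : ∃ z, (∀ i, A i z + a i = 0) ∧ ∀ k, B k z + b k < 0)
    (hopt : ∀ z, (∀ i, A i z + a i = 0) → (∀ k, B k z + b k < 0) → 0 ≤ ℓ z + c) :
    ∃ (lam : ι → ℝ) (mu : κ → ℝ), (∀ k, 0 ≤ mu k) ∧
      ℓ + ∑ i, lam i • A i + ∑ k, mu k • B k = 0 ∧
      0 ≤ c + ∑ i, lam i * a i + ∑ k, mu k * b k := by
  have convex_feasible : Convex ℝ {z | ∀ i, A i z + a i = 0} :=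
    fun x hx y hy s t _ _ hst i => by
      simp only [map_add, map_smul, smul_eq_mul]
      linear_combination s * hx i + t * hy i - a i * hst
  obtain ⟨mu, mu_nonneg, hmu⟩ := exists_multipliers_of_convexOn_of_slater
    ((ℓ.convexOn convex_feasible).add_const c)
    (fun k => ((B k).convexOn convex_feasible).add_const (b k)) hslater hopt
  obtain ⟨lam, hstat, hval⟩ := exists_multipliers_of_nonneg_on_affine (A := A) (a := a)
    (ψ := ℓ + ∑ k, mu k • B k) (c := c + ∑ k, mu k * b k) (hslater.imp fun _ => And.left)
    fun z hz => by
      have := hmu z hz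
      simp only [Pi.add_apply, mul_add, Finset.sum_add_distrib] at this
      simp only [LinearMap.add_apply, LinearMap.sum_apply, LinearMap.smul_apply, smul_eq_mul]
      linarith
  exact ⟨lam, mu, mu_nonneg, by rw [← hstat]; abel, by linarith⟩

end Duality

section Minimax

-- A minimax theorem: that the functions `F d` form a convex cone up to domination replaces the
-- usual convexity in `d`.
theorem exists_mem_forall_nonneg_of_forall_exists_mem {Y D : Type*} [AddCommGroup Y] [Module ℝ Y]
    [TopologicalSpace Y] [Nonempty D] {K : Set Y} (hK : IsCompact K) {F : D → Y → ℝ}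
    (hconc : ∀ d, ConcaveOn ℝ K (F d)) (husc : ∀ d, UpperSemicontinuous (F d))
    (hsmul : ∀ (c : ℝ) d, 0 ≤ c → ∃ z, ∀ η ∈ K, F z η ≤ c * F d η)
    (hadd : ∀ d₁ d₂, ∃ z, ∀ η ∈ K, F z η ≤ F d₁ η + F d₂ η)
    (hpt : ∀ d, ∃ η ∈ K, 0 ≤ F d η) : ∃ η ∈ K, ∀ d, 0 ≤ F d η := by
  have hsum {κ : Type _} (s : Finset κ) (w : κ → ℝ) (hw : ∀ k, 0 ≤ w k) (d : κ → D) :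
      ∃ z, ∀ η ∈ K, F z η ≤ ∑ k ∈ s, w k * F (d k) η := by
    induction s using Finset.induction_on with
    | empty => simpa using hsmul 0 (Classical.arbitrary D) le_rfl
    | insert k s hk ih =>
      obtain ⟨z₁, hz₁⟩ := hsmul (w k) (d k) (hw k)
      obtain ⟨z₂, hz₂⟩ := ih
      obtain ⟨z, hz⟩ := hadd z₁ z₂
      refine ⟨z, fun η hη => ?_⟩
      rw [Finset.sum_insert hk]
      linarith [hz η hη, hz₁ η hη, hz₂ η hη]
  let t : D × Set.Ioi (0 : ℝ) → Set Y := fun i => F i.1 ⁻¹' Set.Ici (-(i.2 : ℝ))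
  have closed_t (i) : IsClosed (t i) := upperSemicontinuous_iff_isClosed_preimage.1 (husc i.1) _
  have finite_inter (u : Finset (D × Set.Ioi (0 : ℝ))) : (K ∩ ⋂ i ∈ u, t i).Nonempty := by
    by_contra hempty
    obtain ⟨η₀, hη₀, -⟩ := hpt (Classical.arbitrary D)
    obtain ⟨w, w_nonneg, w_ne, hw⟩ := exists_weights_sum_nonpos_of_concaveOn ⟨η₀, hη₀⟩
      (φ := fun (i : u) η => F i.1.1 η + i.1.2) (fun i => (hconc i.1.1).add_const _)
      fun η hη => by
        by_contra! hpos
        exact hempty ⟨η, hη, Set.mem_iInter₂.2 fun i hi => by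
          simpa [t] using (neg_lt_iff_pos_add.2 (hpos ⟨i, hi⟩)).le⟩
    obtain ⟨z, hz⟩ := hsum Finset.univ w w_nonneg fun i => i.1.1
    obtain ⟨η, hη, hzη⟩ := hpt z
    obtain ⟨k, hk⟩ := Function.ne_iff.1 w_ne
    have : 0 < ∑ i, w i * (i.1.2 : ℝ) :=
      Finset.sum_pos' (fun i _ => mul_nonneg (w_nonneg i) i.1.2.2.le)
        ⟨k, Finset.mem_univ k, mul_pos ((w_nonneg k).lt_of_ne' hk) k.1.2.2⟩
    have hwη := hw η hη
    simp only [mul_add, Finset.sum_add_distrib] at hwη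
    linarith [hz η hη]
  obtain ⟨η, hη, hmem⟩ := hK.inter_iInter_nonempty t closed_t finite_inter
  refine ⟨η, hη, fun d => le_of_forall_pos_le_add fun ε hε => ?_⟩
  exact neg_le_iff_add_nonneg.1 (Set.mem_iInter.1 hmem (d, ⟨ε, hε⟩))

end Minimax

section RankOneVariation

variable {Y E : Type*} [AddCommGroup E] [Module ℝ E]

theorem exists_sq_add_two_mul_eq_one_and_mul_nonpos (a b : ℝ) :
    ∃ τ : ℝ, τ ^ 2 + 2 * a * τ = 1 ∧ τ * b ≤ 0 := by
  have hsq : √(a ^ 2 + 1) ^ 2 = a ^ 2 + 1 := Real.sq_sqrt (by positivity)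
  have habs : |a| ≤ √(a ^ 2 + 1) := Real.abs_le_sqrt (by linarith)
  obtain ⟨hlo, hhi⟩ := abs_le.1 habs
  rcases le_total b 0 with hb | hb
  · exact ⟨-a + √(a ^ 2 + 1), by linear_combination hsq,
      mul_nonpos_of_nonneg_of_nonpos (by linarith) hb⟩
  · exact ⟨-a - √(a ^ 2 + 1), by linear_combination hsq,
      mul_nonpos_of_nonpos_of_nonneg (by linarith) hb⟩

/-- The mixed terms of the bilinear forms `Q η`, `η ∈ K`, between arbitrary vectors and vectors of
`ker ξ` depend on `η` only through a multiple of one rank-one form. This allows two vectors to be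
merged into a single one, uniformly in `η`. -/
def HasRankOneVariation (Q : Y → LinearMap.BilinForm ℝ E) (K : Set Y) (ξ : Module.Dual ℝ E) :
    Prop :=
  ∃ (B : E → E → ℝ) (ρ : Y → ℝ) (w l : Module.Dual ℝ E),
    ∀ η ∈ K, ∀ d v, ξ v = 0 → Q η d v = B d v + ρ η * (w d * l v)

namespace HasRankOneVariation

variable {Q : Y → LinearMap.BilinForm ℝ E} {K : Set Y} {ξ : Module.Dual ℝ E}

theorem exists_le_add_of_mem_ker (hQ : HasRankOneVariation Q K ξ)
    (hsymm : ∀ η ∈ K, (Q η).IsSymm) (hpt : ∀ d, ∃ η ∈ K, 0 ≤ Q η d d) (d : E) {v : E}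
    (hv : ξ v = 0) : ∃ z, ∀ η ∈ K, Q η z z ≤ Q η d d + Q η v v := by
  obtain ⟨B, ρ, w, l, hB⟩ := hQ
  rcases eq_or_ne (w v * l v) 0 with hwl | hwl
  · obtain ⟨η₀, hη₀, hpos⟩ := hpt v
    refine ⟨d, fun η hη => le_add_of_nonneg_right ?_⟩
    rw [hB η hη v v hv, hwl, mul_zero]
    rwa [hB η₀ hη₀ v v hv, hwl, mul_zero] at hpos
  · have hwv : w v ≠ 0 := left_ne_zero_of_mul hwl
    obtain ⟨τ, hτ, hτB⟩ :=
      exists_sq_add_two_mul_eq_one_and_mul_nonpos (w d / w v) (B d v - w d / w v * B v v)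
    refine ⟨d + τ • v, fun η hη => ?_⟩
    have mixed : Q η d v = (B d v - w d / w v * B v v) + w d / w v * Q η v v := by
      rw [hB η hη d v hv, hB η hη v v hv]
      field_simp
      ring
    have expand : Q η (d + τ • v) (d + τ • v)
        = Q η d d + 2 * τ * Q η d v + τ ^ 2 * Q η v v := by
      simp only [map_add, map_smul, LinearMap.add_apply, LinearMap.smul_apply, smul_eq_mul,
        (hsymm η hη).eq v d]
      ring
    rw [expand, mixed]
    linear_combination 2 * hτB + Q η v v * hτ

-- Rotating the pair `(d₁, d₂)` keeps `Q η d₁ d₁ + Q η d₂ d₂` and can move one vector into `ker ξ`.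
theorem exists_le_add (hQ : HasRankOneVariation Q K ξ) (hsymm : ∀ η ∈ K, (Q η).IsSymm)
    (hpt : ∀ d, ∃ η ∈ K, 0 ≤ Q η d d) (d₁ d₂ : E) :
    ∃ z, ∀ η ∈ K, Q η z z ≤ Q η d₁ d₁ + Q η d₂ d₂ := by
  rcases eq_or_ne (ξ d₂) 0 with h₂ | h₂
  · exact hQ.exists_le_add_of_mem_ker hsymm hpt d₁ h₂
  let R : ℝ := √(ξ d₁ ^ 2 + ξ d₂ ^ 2)
  have R_ne : R ≠ 0 := (Real.sqrt_pos.2 (by positivity)).ne'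
  have R_sq : R ^ 2 = ξ d₁ ^ 2 + ξ d₂ ^ 2 := Real.sq_sqrt (by positivity)
  let c : ℝ := ξ d₂ / R
  let s : ℝ := ξ d₁ / R
  have rotation : c ^ 2 + s ^ 2 = 1 := by
    rw [div_pow, div_pow, ← add_div, add_comm, ← R_sq, div_self (pow_ne_zero 2 R_ne)]
  obtain ⟨z, hz⟩ := hQ.exists_le_add_of_mem_ker hsymm hpt (s • d₁ + c • d₂)
    (v := c • d₁ - s • d₂) (by simp only [map_sub, map_smul, smul_eq_mul, c, s]; ring)
  refine ⟨z, fun η hη => (hz η hη).trans_eq ?_⟩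
  simp only [map_add, map_sub, map_smul, LinearMap.add_apply, LinearMap.sub_apply,
    LinearMap.smul_apply, smul_eq_mul]
  linear_combination (Q η d₁ d₁ + Q η d₂ d₂) * rotation

theorem exists_mem_forall_nonneg [AddCommGroup Y] [Module ℝ Y] [TopologicalSpace Y]
    (hQ : HasRankOneVariation Q K ξ) (hsymm : ∀ η ∈ K, (Q η).IsSymm) (hK : IsCompact K)
    (hconc : ∀ d, ConcaveOn ℝ K fun η => Q η d d)
    (husc : ∀ d, UpperSemicontinuous fun η => Q η d d) (hpt : ∀ d, ∃ η ∈ K, 0 ≤ Q η d d) :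
    ∃ η ∈ K, ∀ d, 0 ≤ Q η d d := by
  refine exists_mem_forall_nonneg_of_forall_exists_mem hK hconc husc (fun c d hc => ?_)
    (hQ.exists_le_add hsymm hpt) hpt
  refine ⟨√c • d, fun η _ => le_of_eq ?_⟩
  simp only [map_smul, LinearMap.smul_apply, smul_eq_mul]
  rw [← mul_assoc, Real.mul_self_sqrt hc]

end HasRankOneVariation

end RankOneVariation

section ParabolicExpansion

variable {E F : Type*} [NormedAddCommGroup E] [NormedSpace ℝ E] [NormedAddCommGroup F]
  [NormedSpace ℝ F]

theorem isLittleO_sub_taylor_two {φ : E → F} {x : E} (hφ : ContDiffAt ℝ 2 φ x) :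
    (fun y => φ y - φ x - fderiv ℝ φ x (y - x)
      - (1 / 2 : ℝ) • fderiv ℝ (fderiv ℝ φ) x (y - x) (y - x))
      =o[nhds x] fun y => ‖y - x‖ ^ 2 := by
  obtain ⟨r, hr, hdiff⟩ : ∃ r > 0, ∀ y ∈ Metric.ball x r, DifferentiableAt ℝ φ y :=
    Metric.eventually_nhds_iff_ball.1 <|
      (hφ.eventually (by simp)).mono fun y hy => hy.differentiableAt (by simp)
  let D := fderiv ℝ (fderiv ℝ φ) x
  have hD : HasFDerivAt (fderiv ℝ φ) D x :=
    ((hφ.fderiv_right (m := 1) le_rfl).differentiableAt (by simp)).hasFDerivAt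
  have symm_D (v w : E) : D v w = D w v := hφ.isSymmSndFDerivAt (by simp) v w
  let R : E → F := fun y => φ y - φ x - fderiv ℝ φ x (y - x) - (1 / 2 : ℝ) • D (y - x) (y - x)
  have hR (y) (hy : y ∈ Metric.ball x r) :
      HasFDerivAt R (fderiv ℝ φ y - fderiv ℝ φ x - D (y - x)) y := by
    have hsub : HasFDerivAt (fun y => y - x) (.id ℝ E) y := (hasFDerivAt_id y).sub_const x
    refine ((((hdiff y hy).hasFDerivAt.sub_const _).sub
      ((fderiv ℝ φ x).hasFDerivAt.comp y hsub)).sub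
      ((D.hasFDerivAt_of_bilinear hsub hsub).const_smul (1 / 2 : ℝ))).congr_fderiv ?_
    ext v
    simp [symm_D v, ← two_smul ℝ]
  have R_center : R x = 0 := by simp [R]
  have := (convex_ball x r).isLittleO_pow_succ (Metric.mem_ball_self hr)
    (fun y hy => (hR y hy).hasFDerivWithinAt) (n := 1) <| by
      simpa [Metric.isOpen_ball.nhdsWithin_eq (Metric.mem_ball_self hr)]
        using hD.isLittleO.norm_right
  simpa only [R_center, sub_zero, Metric.isOpen_ball.nhdsWithin_eq (Metric.mem_ball_self hr)]
    using this

/-- The curve `u` satisfies `u t = t d + t² z + o(t²)` as `t → 0⁺`; feasible arcs of this form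
detect second-order conditions. -/
def HasParabolicExpansion (u : ℝ → E) (d z : E) : Prop :=
  (fun t => u t - t • d - t ^ 2 • z) =o[nhdsWithin 0 (Set.Ioi 0)] fun t : ℝ => t ^ 2

namespace HasParabolicExpansion

theorem parabola (d z : E) : HasParabolicExpansion (fun t => t • d + t ^ 2 • z) d z := by
  simp [HasParabolicExpansion]

variable {u : ℝ → E} {d z : E}

theorem congr_of_isLittleO {v : ℝ → E} (hu : HasParabolicExpansion u d z)
    (hv : (fun t => v t - u t) =o[nhdsWithin 0 (Set.Ioi 0)] fun t : ℝ => t ^ 2) :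
    HasParabolicExpansion v d z :=
  (hv.add hu).congr_left fun t => by abel

theorem isLittleO_sub_smul (hu : HasParabolicExpansion u d z) :
    (fun t => u t - t • d) =o[nhdsWithin 0 (Set.Ioi 0)] fun t : ℝ => t := by
  have sq_isLittleO : (fun t : ℝ => t ^ 2) =o[nhdsWithin 0 (Set.Ioi 0)] fun t : ℝ => t :=
    (Asymptotics.isLittleO_pow_id one_lt_two).mono nhdsWithin_le_nhds
  have hz : (fun t : ℝ => t ^ 2 • z) =O[nhdsWithin 0 (Set.Ioi 0)] fun t : ℝ => t ^ 2 :=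
    .of_bound ‖z‖ (.of_forall fun t => by rw [norm_smul, mul_comm])
  exact ((hu.isBigO.add hz).trans_isLittleO sq_isLittleO).congr_left fun t => by abel

theorem isBigO_id (hu : HasParabolicExpansion u d z) :
    u =O[nhdsWithin 0 (Set.Ioi 0)] fun t : ℝ => t := by
  have hd : (fun t : ℝ => t • d) =O[nhdsWithin 0 (Set.Ioi 0)] fun t : ℝ => t :=
    .of_bound ‖d‖ (.of_forall fun t => by rw [norm_smul, mul_comm])
  exact (hu.isLittleO_sub_smul.isBigO.add hd).congr_left fun t => by abel

theorem tendsto_add (hu : HasParabolicExpansion u d z) (x : E) :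
    Filter.Tendsto (fun t => x + u t) (nhdsWithin 0 (Set.Ioi 0)) (nhds x) := by
  have : Filter.Tendsto u (nhdsWithin 0 (Set.Ioi 0)) (nhds 0) :=
    hu.isBigO_id.trans_tendsto (Filter.tendsto_id.mono_left nhdsWithin_le_nhds)
  simpa using this.const_add x

theorem comp {φ : E → F} {x : E} (hφ : ContDiffAt ℝ 2 φ x) (hu : HasParabolicExpansion u d z) :
    HasParabolicExpansion (fun t => φ (x + u t) - φ x) (fderiv ℝ φ x d)
      (fderiv ℝ φ x z + (1 / 2 : ℝ) • fderiv ℝ (fderiv ℝ φ) x d d) := by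
  let D := fderiv ℝ (fderiv ℝ φ) x
  have remainder : (fun t => φ (x + u t) - φ x - fderiv ℝ φ x (u t) - (1 / 2 : ℝ) • D (u t) (u t))
      =o[nhdsWithin 0 (Set.Ioi 0)] fun t : ℝ => t ^ 2 := by
    have := (isLittleO_sub_taylor_two hφ).comp_tendsto (hu.tendsto_add x)
    simp only [Function.comp_def, add_sub_cancel_left] at this
    exact this.trans_isBigO (hu.isBigO_id.norm_left.pow 2)
  have linear : (fun t => fderiv ℝ φ x (u t - t • d - t ^ 2 • z))
      =o[nhdsWithin 0 (Set.Ioi 0)] fun t : ℝ => t ^ 2 :=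
    ((fderiv ℝ φ x).isBigO_comp _ _).trans_isLittleO hu
  have quadratic : (fun t => D (u t - t • d) (u t) + t • D d (u t - t • d))
      =o[nhdsWithin 0 (Set.Ioi 0)] fun t : ℝ => t ^ 2 := by
    have left : (fun t => D (u t - t • d) (u t)) =o[nhdsWithin 0 (Set.Ioi 0)] fun t => t * t :=
      D.isBoundedBilinearMap.isBigO_comp.trans_isLittleO
        (hu.isLittleO_sub_smul.norm_left.mul_isBigO hu.isBigO_id.norm_left)
    have right : (fun t => t • D d (u t - t • d)) =o[nhdsWithin 0 (Set.Ioi 0)] fun t => t • t :=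
      (Asymptotics.isBigO_refl _ _).smul_isLittleO
        (((D d).isBigO_comp _ _).trans_isLittleO hu.isLittleO_sub_smul)
    simpa only [pow_two] using left.add right
  refine ((remainder.add linear).add (quadratic.const_smul_left (1 / 2 : ℝ))).congr_left fun t => ?_
  simp only [map_sub, map_smul, _root_.sub_apply, _root_.smul_apply, Pi.smul_apply, D]
  module

theorem eventually_neg {u : ℝ → ℝ} {a b : ℝ} (hu : HasParabolicExpansion u a b)
    (hab : a < 0 ∨ a = 0 ∧ b < 0) : ∀ᶠ t in nhdsWithin 0 (Set.Ioi 0), u t < 0 := by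
  rcases hab with ha | ⟨rfl, hb⟩
  · filter_upwards [hu.isLittleO_sub_smul.bound (half_pos (neg_pos.2 ha)),
      self_mem_nhdsWithin] with t ht (htpos : 0 < t)
    rw [Real.norm_eq_abs, Real.norm_of_nonneg htpos.le, smul_eq_mul] at ht
    nlinarith [le_abs_self (u t - t * a)]
  · filter_upwards [hu.bound (half_pos (neg_pos.2 hb)), self_mem_nhdsWithin]
      with t ht (htpos : 0 < t)
    rw [Real.norm_eq_abs, Real.norm_of_nonneg (sq_nonneg t), smul_zero, smul_eq_mul] at ht
    nlinarith [le_abs_self (u t - 0 - t ^ 2 * b), sq_pos_of_pos htpos]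

end HasParabolicExpansion

theorem exists_eq_norm_sub_le_of_hasStrictFDerivAt [CompleteSpace E] [CompleteSpace F] {H : E → F}
    {A : E →L[ℝ] F} {x : E} (hH : HasStrictFDerivAt H A x) (hA : Function.Surjective A) :
    ∃ C : ℝ, ∀ᶠ y in nhds x, ∃ y', H y' = H x ∧ ‖y' - y‖ ≤ C * ‖H y - H x‖ := by
  have hrange : A.range = ⊤ := LinearMap.range_eq_top.2 hA
  let S := A.nonlinearRightInverseOfSurjective hrange
  have S_pos : 0 < S.nnnorm := A.nonlinearRightInverseOfSurjective_nnnorm_pos hrange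
  obtain ⟨s, hs, happrox⟩ :=
    hH.approximates_deriv_on_nhds (c := S.nnnorm⁻¹ / 2) (.inr (half_pos (inv_pos.2 S_pos)))
  obtain ⟨δ, hδ, hball⟩ := Metric.mem_nhds_iff.1 hs
  let ε : E → ℝ := fun y => 2 * S.nnnorm * ‖H y - H x‖
  have ε_small : ∀ᶠ y in nhds x, ε y < δ / 2 := by
    have : ContinuousAt ε x := (hH.continuousAt.sub continuousAt_const).norm.const_mul _
    exact this.eventually_lt_const (by simpa [ε] using half_pos hδ)
  refine ⟨2 * S.nnnorm, ?_⟩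
  filter_upwards [Metric.ball_mem_nhds x (half_pos hδ), ε_small] with y hy hεy
  have hsub : Metric.closedBall y (ε y) ⊆ s :=
    (Metric.closedBall_subset_ball' (by linarith [Metric.mem_ball.1 hy])).trans hball
  have hmem : H x ∈ Metric.closedBall (H y)
      (((S.nnnorm : ℝ)⁻¹ - ((S.nnnorm⁻¹ / 2 : NNReal) : ℝ)) * ε y) := by
    rw [Metric.mem_closedBall', dist_eq_norm]
    have : (S.nnnorm : ℝ) ≠ 0 := by exact_mod_cast S_pos.ne'
    refine le_of_eq ?_
    simp only [ε]
    push_cast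
    field_simp
    ring
  obtain ⟨y', hy', hHy'⟩ :=
    happrox.surjOn_closedBall_of_nonlinearRightInverse S (by positivity) hsub hmem
  exact ⟨y', hHy', by rwa [← dist_eq_norm]⟩

theorem HasParabolicExpansion.exists_levelCurve [CompleteSpace E] [CompleteSpace F] {H : E → F}
    {A : E →L[ℝ] F} {x : E} {y : ℝ → E} {d z : E} (hy : HasParabolicExpansion y d z)
    (hH : HasStrictFDerivAt H A x) (hA : Function.Surjective A)
    (hHy : (fun t => H (x + y t) - H x) =o[nhdsWithin 0 (Set.Ioi 0)] fun t : ℝ => t ^ 2) :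
    ∃ u, HasParabolicExpansion u d z ∧
      ∀ᶠ t in nhdsWithin 0 (Set.Ioi 0), H (x + u t) = H x := by
  obtain ⟨C, hC⟩ := exists_eq_norm_sub_le_of_hasStrictFDerivAt hH hA
  obtain ⟨v, hv⟩ := ((hy.tendsto_add x).eventually hC).choice
  have correction : (fun t => v t - x - y t)
      =O[nhdsWithin 0 (Set.Ioi 0)] fun t => H (x + y t) - H x :=
    .of_bound C (hv.mono fun t ht => by rw [sub_sub]; exact ht.2)
  refine ⟨fun t => v t - x, hy.congr_of_isLittleO (correction.trans_isLittleO hHy), ?_⟩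
  filter_upwards [hv] with t ht
  rw [add_sub_cancel, ht.1]

end ParabolicExpansion

section Lagrangian

theorem sum_extend_smul {ι κ R M : Type*} [Fintype ι] [Fintype κ] [Semiring R] [AddCommMonoid M]
    [Module R M] {e : ι → κ} (he : Function.Injective e) (w : ι → R) (c : κ → M) :
    ∑ j, Function.extend e w 0 j • c j = ∑ i, w i • c (e i) := by
  refine (Fintype.sum_of_injective e he _ _ (fun j hj => ?_) fun i => ?_).symm
  · rw [Function.extend_apply' _ _ _ hj, Pi.zero_apply, zero_smul]
  · rw [he.extend_apply]

variable {n m p : ℕ} {f : (Fin n → ℝ) → ℝ} {h : Fin m → (Fin n → ℝ) → ℝ}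
  {g : Fin p → (Fin n → ℝ) → ℝ} {xs : Fin n → ℝ} {lam : Fin m → ℝ} {mu : Fin p → ℝ}

theorem fderiv_Lagr {x : Fin n → ℝ} (hf : DifferentiableAt ℝ f x)
    (hh : ∀ i, DifferentiableAt ℝ (h i) x) (hg : ∀ j, DifferentiableAt ℝ (g j) x) :
    fderiv ℝ (Lagr f h g lam mu) x =
      fderiv ℝ f x + ∑ i, lam i • fderiv ℝ (h i) x + ∑ j, mu j • fderiv ℝ (g j) x :=
  ((hf.hasFDerivAt.add (.fun_sum fun i _ => (hh i).hasFDerivAt.const_mul (lam i))).add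
    (.fun_sum fun j _ => (hg j).hasFDerivAt.const_mul (mu j))).fderiv

theorem fderiv_fderiv_Lagr (hf : ContDiff ℝ 2 f) (hh : ∀ i, ContDiff ℝ 2 (h i))
    (hg : ∀ j, ContDiff ℝ 2 (g j)) (x : Fin n → ℝ) :
    fderiv ℝ (fderiv ℝ (Lagr f h g lam mu)) x = fderiv ℝ (fderiv ℝ f) x
      + ∑ i, lam i • fderiv ℝ (fderiv ℝ (h i)) x + ∑ j, mu j • fderiv ℝ (fderiv ℝ (g j)) x := by
  have hLagr : fderiv ℝ (Lagr f h g lam mu) = fun x =>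
      fderiv ℝ f x + ∑ i, lam i • fderiv ℝ (h i) x + ∑ j, mu j • fderiv ℝ (g j) x :=
    funext fun x => fderiv_Lagr (hf.differentiable two_ne_zero x)
      (fun i => (hh i).differentiable two_ne_zero x) fun j => (hg j).differentiable two_ne_zero x
  have hasFDerivAt_fderiv {φ : (Fin n → ℝ) → ℝ} (hφ : ContDiff ℝ 2 φ) :
      HasFDerivAt (fderiv ℝ φ) (fderiv ℝ (fderiv ℝ φ) x) x :=
    ((hφ.fderiv_right (m := 1) le_rfl).differentiable one_ne_zero x).hasFDerivAt
  rw [hLagr]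
  exact (((hasFDerivAt_fderiv hf).add
    (.fun_sum fun i _ => (hasFDerivAt_fderiv (hh i)).const_smul (lam i))).add
    (.fun_sum fun j _ => (hasFDerivAt_fderiv (hg j)).const_smul (mu j))).fderiv

theorem contDiff_Lagr {k : WithTop ℕ∞} (hf : ContDiff ℝ k f) (hh : ∀ i, ContDiff ℝ k (h i))
    (hg : ∀ j, ContDiff ℝ k (g j)) : ContDiff ℝ k (Lagr f h g lam mu) := by
  unfold Lagr
  fun_prop

theorem hessQ_eq_fderiv_fderiv (φ : (Fin n → ℝ) → ℝ) (x d : Fin n → ℝ) :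
    hessQ φ x d = fderiv ℝ (fderiv ℝ φ) x d d :=
  iteratedFDeriv_two_apply φ x _

end Lagrangian

section SecondOrderNecessary

variable {n m p : ℕ} {f : (Fin n → ℝ) → ℝ} {h : Fin m → (Fin n → ℝ) → ℝ}
  {g : Fin p → (Fin n → ℝ) → ℝ} {xs : Fin n → ℝ}

theorem surjective_pi_fderiv (hindep : LinearIndependent ℝ fun i => fderiv ℝ (h i) xs) :
    Function.Surjective (ContinuousLinearMap.pi fun i => fderiv ℝ (h i) xs) :=
  pi_surjective_of_linearIndependent (hindep.map' (ContinuousLinearMap.coeLM ℝ)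
    (LinearMap.ker_eq_bot.2 ContinuousLinearMap.coe_injective))

theorem MFCQ.exists_fderiv_add_eq_zero_and_neg (hmfcq : MFCQ h g xs) (a : Fin m → ℝ)
    (b : Fin p → ℝ) : ∃ z, (∀ i, fderiv ℝ (h i) xs z + a i = 0) ∧
      ∀ j, g j xs = 0 → fderiv ℝ (g j) xs z + b j < 0 := by
  obtain ⟨hindep, d, hd, gd⟩ := hmfcq
  obtain ⟨z, hz⟩ := surjective_pi_fderiv hindep (-a)
  have eventually_neg : ∀ j, ∀ᶠ s : ℝ in Filter.atTop,
      g j xs = 0 → fderiv ℝ (g j) xs z + s * fderiv ℝ (g j) xs d + b j < 0 := fun j => by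
    by_cases hj : g j xs = 0
    · filter_upwards [(Filter.tendsto_id.atTop_mul_const_of_neg (gd j hj)).eventually_lt_atBot
        (-(fderiv ℝ (g j) xs z + b j))] with s hs _
      rw [id] at hs
      linarith
    · exact .of_forall fun s hj' => absurd hj' hj
  obtain ⟨s, hs⟩ := (Filter.eventually_all.2 eventually_neg).exists
  refine ⟨z + s • d, fun i => ?_, fun j hj => ?_⟩
  · have hzi : fderiv ℝ (h i) xs z = -a i := congrFun hz i
    rw [map_add, map_smul, hd i, smul_zero, add_zero, hzi, neg_add_cancel]
  · rw [map_add, map_smul, smul_eq_mul]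
    exact hs j hj

theorem exists_feasible_arc (hh : ∀ i, ContDiff ℝ 2 (h i)) (hg : ∀ j, ContDiff ℝ 2 (g j))
    (hfeas : Feas h g xs) (hindep : LinearIndependent ℝ fun i => fderiv ℝ (h i) xs)
    {d z : Fin n → ℝ} (hd : ∀ i, fderiv ℝ (h i) xs d = 0)
    (hz : ∀ i, fderiv ℝ (h i) xs z + 1 / 2 * fderiv ℝ (fderiv ℝ (h i)) xs d d = 0)
    (gd : ∀ j, g j xs = 0 → fderiv ℝ (g j) xs d ≤ 0)
    (gz : ∀ j, g j xs = 0 → fderiv ℝ (g j) xs d = 0 →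
      fderiv ℝ (g j) xs z + 1 / 2 * fderiv ℝ (fderiv ℝ (g j)) xs d d < 0) :
    ∃ u, HasParabolicExpansion u d z ∧
      ∀ᶠ t in nhdsWithin 0 (Set.Ioi 0), Feas h g (xs + u t) := by
  have almost_feasible : (fun t : ℝ => (fun i => h i (xs + (t • d + t ^ 2 • z))) - fun i => h i xs)
      =o[nhdsWithin 0 (Set.Ioi 0)] fun t : ℝ => t ^ 2 := by
    refine Asymptotics.isLittleO_pi.2 fun i => ?_
    have := (HasParabolicExpansion.parabola d z).comp ((hh i).contDiffAt (x := xs))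
    rw [hd i, smul_eq_mul, hz i] at this
    simpa [HasParabolicExpansion] using this
  obtain ⟨u, hu, hconst⟩ := (HasParabolicExpansion.parabola d z).exists_levelCurve
    (H := fun x i => h i x) (A := .pi fun i => fderiv ℝ (h i) xs)
    (hasStrictFDerivAt_pi'.2 fun i => (hh i).contDiffAt.hasStrictFDerivAt two_ne_zero)
    (surjective_pi_fderiv hindep) almost_feasible
  refine ⟨u, hu, (hconst.mono fun t ht i => (congrFun ht i).trans (hfeas.1 i)).and
    (Filter.eventually_all.2 fun j => ?_)⟩
  rcases (hfeas.2 j).lt_or_eq with hlt | heq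
  · exact (((hg j).continuous.tendsto xs).comp (hu.tendsto_add xs)).eventually_le_const hlt
  · refine ((hu.comp (hg j).contDiffAt).eventually_neg ?_).mono fun t ht => by linarith
    exact (gd j heq).lt_or_eq.imp_right fun h0 => ⟨h0, gz j heq h0⟩

theorem nonneg_of_isLocalMinOn (hf : ContDiff ℝ 2 f) (hh : ∀ i, ContDiff ℝ 2 (h i))
    (hg : ∀ j, ContDiff ℝ 2 (g j)) (hfeas : Feas h g xs)
    (hmin : IsLocalMinOn f {x | Feas h g x} xs)
    (hindep : LinearIndependent ℝ fun i => fderiv ℝ (h i) xs) {d z : Fin n → ℝ}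
    (hd : critCone f h g xs d)
    (hz : ∀ i, fderiv ℝ (h i) xs z + 1 / 2 * fderiv ℝ (fderiv ℝ (h i)) xs d d = 0)
    (gz : ∀ j, g j xs = 0 → fderiv ℝ (g j) xs d = 0 →
      fderiv ℝ (g j) xs z + 1 / 2 * fderiv ℝ (fderiv ℝ (g j)) xs d d < 0) :
    0 ≤ fderiv ℝ f xs z + 1 / 2 * fderiv ℝ (fderiv ℝ f) xs d d := by
  obtain ⟨u, hu, feas_u⟩ := exists_feasible_arc hh hg hfeas hindep hd.2.1 hz hd.2.2 gz
  by_contra! hneg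
  have decrease := (hu.comp hf.contDiffAt).eventually_neg (.inr ⟨hd.1, hneg⟩)
  have minimal := (hu.tendsto_add xs).eventually (eventually_nhdsWithin_iff.1 hmin)
  obtain ⟨t, ht, ht_feas, ht_min⟩ := (decrease.and (feas_u.and minimal)).exists
  linarith [ht_min ht_feas]

theorem MFCQ.exists_isLagMult_nonneg (hmfcq : MFCQ h g xs) (hf : ContDiff ℝ 2 f)
    (hh : ∀ i, ContDiff ℝ 2 (h i)) (hg : ∀ j, ContDiff ℝ 2 (g j)) (hfeas : Feas h g xs)
    (hmin : IsLocalMinOn f {x | Feas h g x} xs) {d : Fin n → ℝ} (hd : critCone f h g xs d) :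
    ∃ lam mu, IsLagMult f h g xs lam mu ∧
      0 ≤ fderiv ℝ (fderiv ℝ (Lagr f h g lam mu)) xs d d := by
  let secondOrder (φ : (Fin n → ℝ) → ℝ) : ℝ := 1 / 2 * fderiv ℝ (fderiv ℝ φ) xs d d
  let κ := {j : Fin p // g j xs = 0 ∧ fderiv ℝ (g j) xs d = 0}
  obtain ⟨z₀, hz₀, gz₀⟩ := hmfcq.exists_fderiv_add_eq_zero_and_neg
    (fun i => secondOrder (h i)) fun j => secondOrder (g j)
  obtain ⟨lam, mu, mu_nonneg, stationary, hvalue⟩ := exists_multipliers_of_slater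
    (A := fun i => (fderiv ℝ (h i) xs : (Fin n → ℝ) →ₗ[ℝ] ℝ))
    (B := fun k : κ => (fderiv ℝ (g k) xs : (Fin n → ℝ) →ₗ[ℝ] ℝ))
    (ℓ := (fderiv ℝ f xs : (Fin n → ℝ) →ₗ[ℝ] ℝ)) (a := fun i => secondOrder (h i))
    (b := fun k => secondOrder (g k)) (c := secondOrder f)
    ⟨z₀, hz₀, fun k => gz₀ k k.2.1⟩ fun z hz gz =>
      nonneg_of_isLocalMinOn hf hh hg hfeas hmin hmfcq.1 hd hz fun j hj hj' => gz ⟨j, hj, hj'⟩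
  have extend_nonneg : 0 ≤ Function.extend (Subtype.val : κ → Fin p) mu 0 :=
    Function.extend_nonneg mu_nonneg le_rfl
  refine ⟨lam, Function.extend Subtype.val mu 0, ⟨extend_nonneg, ?_, fun j => ?_⟩, ?_⟩
  · rw [fderiv_Lagr (hf.differentiable two_ne_zero xs)
      (fun i => (hh i).differentiable two_ne_zero xs)
      fun j => (hg j).differentiable two_ne_zero xs, sum_extend_smul Subtype.val_injective]
    ext1 z
    simpa using LinearMap.congr_fun stationary z
  · by_cases hj : ∃ k : κ, k.1 = j
    · obtain ⟨k, rfl⟩ := hj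
      rw [k.2.1, mul_zero]
    · rw [Function.extend_apply' _ _ _ hj, Pi.zero_apply, zero_mul]
  · rw [fderiv_fderiv_Lagr hf hh hg, sum_extend_smul Subtype.val_injective]
    simp only [_root_.add_apply, _root_.sum_apply, _root_.smul_apply, smul_eq_mul]
    have : secondOrder f + ∑ i, lam i * secondOrder (h i) + ∑ k, mu k * secondOrder (g k) = 1 / 2 *
        (fderiv ℝ (fderiv ℝ f) xs d d + ∑ i, lam i * fderiv ℝ (fderiv ℝ (h i)) xs d d
          + ∑ k, mu k * fderiv ℝ (fderiv ℝ (g k)) xs d d) := by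
      simp only [secondOrder, mul_add, Finset.mul_sum, mul_left_comm]
    linarith

end SecondOrderNecessary

section MultiplierSet

variable {n m p : ℕ} {f : (Fin n → ℝ) → ℝ} {h : Fin m → (Fin n → ℝ) → ℝ}
  {g : Fin p → (Fin n → ℝ) → ℝ} {xs : Fin n → ℝ} {lam : Fin m → ℝ} {mu : Fin p → ℝ}

/-- The set `Λ(xs)` of Lagrange multipliers, as a subset of the space of pairs `(λ, μ)`, where its
convexity and compactness make sense. -/
def lagMultSet (f : (Fin n → ℝ) → ℝ) (h : Fin m → (Fin n → ℝ) → ℝ) (g : Fin p → (Fin n → ℝ) → ℝ)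
    (xs : Fin n → ℝ) : Set ((Fin m → ℝ) × (Fin p → ℝ)) :=
  {η | IsLagMult f h g xs η.1 η.2}

namespace IsLagMult

theorem fderiv_add_sum_eq_zero (hη : IsLagMult f h g xs lam mu) (hf : DifferentiableAt ℝ f xs)
    (hh : ∀ i, DifferentiableAt ℝ (h i) xs) (hg : ∀ j, DifferentiableAt ℝ (g j) xs)
    (z : Fin n → ℝ) :
    fderiv ℝ f xs z + ∑ i, lam i * fderiv ℝ (h i) xs z + ∑ j, mu j * fderiv ℝ (g j) xs z = 0 := by
  have := DFunLike.congr_fun (fderiv_Lagr (lam := lam) (mu := mu) hf hh hg) z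
  rw [hη.2.1] at this
  simpa using this.symm

theorem eq_zero_of_ne_zero (hη : IsLagMult f h g xs lam mu) {j : Fin p} (hj : g j xs ≠ 0) :
    mu j = 0 :=
  (mul_eq_zero.1 (hη.2.2 j)).resolve_right hj

theorem mul_fderiv_nonpos (hη : IsLagMult f h g xs lam mu) {d : Fin n → ℝ}
    (hd : ∀ j, g j xs = 0 → fderiv ℝ (g j) xs d ≤ 0) (j : Fin p) :
    mu j * fderiv ℝ (g j) xs d ≤ 0 := by
  by_cases hj : g j xs = 0
  · exact mul_nonpos_of_nonneg_of_nonpos (hη.1 j) (hd j hj)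
  · rw [hη.eq_zero_of_ne_zero hj, zero_mul]

end IsLagMult

theorem isClosed_lagMultSet (hf : DifferentiableAt ℝ f xs) (hh : ∀ i, DifferentiableAt ℝ (h i) xs)
    (hg : ∀ j, DifferentiableAt ℝ (g j) xs) : IsClosed (lagMultSet f h g xs) := by
  simp only [lagMultSet, IsLagMult, fderiv_Lagr hf hh hg, Set.ofPred_and, Set.ofPred_forall]
  exact .inter (isClosed_iInter fun j => isClosed_le (by fun_prop) (by fun_prop))
    (.inter (isClosed_eq (by fun_prop) (by fun_prop))
      (isClosed_iInter fun j => isClosed_eq (by fun_prop) (by fun_prop)))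

theorem convex_lagMultSet (hf : DifferentiableAt ℝ f xs) (hh : ∀ i, DifferentiableAt ℝ (h i) xs)
    (hg : ∀ j, DifferentiableAt ℝ (g j) xs) : Convex ℝ (lagMultSet f h g xs) := by
  rintro η hη η' hη' s t hs ht hst
  refine ⟨fun j => add_nonneg (mul_nonneg hs (hη.1 j)) (mul_nonneg ht (hη'.1 j)), ?_, fun j => ?_⟩
  · rw [fderiv_Lagr hf hh hg]
    ext1 z
    have eq_z := hη.fderiv_add_sum_eq_zero hf hh hg z
    have eq_z' := hη'.fderiv_add_sum_eq_zero hf hh hg z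
    simp only [_root_.add_apply, _root_.sum_apply, _root_.smul_apply, smul_eq_mul, Prod.fst_add,
      Prod.snd_add, Prod.smul_fst, Prod.smul_snd, Pi.add_apply, Pi.smul_apply, add_mul,
      Finset.sum_add_distrib, mul_assoc, ← Finset.mul_sum, _root_.zero_apply]
    linear_combination s * eq_z + t * eq_z' - fderiv ℝ f xs z * hst
  · simp only [Prod.snd_add, Prod.smul_snd, Pi.add_apply, Pi.smul_apply, smul_eq_mul]
    linear_combination s * hη.2.2 j + t * hη'.2.2 j

theorem MFCQ.exists_forall_mult_le (hmfcq : MFCQ h g xs) (hf : DifferentiableAt ℝ f xs)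
    (hh : ∀ i, DifferentiableAt ℝ (h i) xs) (hg : ∀ j, DifferentiableAt ℝ (g j) xs) :
    ∃ b, ∀ η ∈ lagMultSet f h g xs, η.2 ≤ b := by
  obtain ⟨d, hd, gd⟩ := hmfcq.2
  refine ⟨fun j => |fderiv ℝ f xs d / fderiv ℝ (g j) xs d|, fun η hη j => ?_⟩
  by_cases hj : g j xs = 0
  · have stationary := hη.fderiv_add_sum_eq_zero hf hh hg d
    simp only [hd, mul_zero, Finset.sum_const_zero, add_zero] at stationary
    have single_le := Finset.single_le_sum (f := fun k => -(η.2 k * fderiv ℝ (g k) xs d))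
      (fun k _ => neg_nonneg.2 (hη.mul_fderiv_nonpos (fun k hk => (gd k hk).le) k))
      (Finset.mem_univ j)
    rw [Finset.sum_neg_distrib] at single_le
    refine le_trans ?_ (neg_le_abs _)
    rw [← div_neg, le_div_iff₀ (neg_pos.2 (gd j hj))]
    linarith
  · rw [hη.eq_zero_of_ne_zero hj]
    exact abs_nonneg _

theorem MFCQ.isCompact_lagMultSet (hmfcq : MFCQ h g xs) (hf : DifferentiableAt ℝ f xs)
    (hh : ∀ i, DifferentiableAt ℝ (h i) xs) (hg : ∀ j, DifferentiableAt ℝ (g j) xs) :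
    IsCompact (lagMultSet f h g xs) := by
  obtain ⟨b, hb⟩ := hmfcq.exists_forall_mult_le hf hh hg
  choose z hz using fun i => surjective_pi_fderiv hmfcq.1 (Pi.single i 1)
  have hz_apply (i k) : fderiv ℝ (h k) xs (z i) = if k = i then 1 else 0 := by
    simpa [Pi.single_apply] using congrFun (hz i) k
  let lamOf (mu : Fin p → ℝ) (i : Fin m) : ℝ :=
    -(fderiv ℝ f xs (z i) + ∑ j, mu j * fderiv ℝ (g j) xs (z i))
  refine ((isCompact_Icc (a := 0) (b := b)).image
    (f := fun mu => (lamOf mu, mu)) (by fun_prop)).of_isClosed_subset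
    (isClosed_lagMultSet hf hh hg)
    fun η hη => ⟨η.2, ⟨hη.1, hb η hη⟩, Prod.ext (funext fun i => ?_) rfl⟩
  have := hη.fderiv_add_sum_eq_zero hf hh hg (z i)
  simp only [hz_apply, mul_ite, mul_one, mul_zero, Finset.sum_ite_eq', Finset.mem_univ, if_true]
    at this
  simp only [lamOf]
  linarith

theorem continuous_fderiv_fderiv_Lagr (hf : ContDiff ℝ 2 f) (hh : ∀ i, ContDiff ℝ 2 (h i))
    (hg : ∀ j, ContDiff ℝ 2 (g j)) (x d : Fin n → ℝ) :
    Continuous fun η : (Fin m → ℝ) × (Fin p → ℝ) =>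
      fderiv ℝ (fderiv ℝ (Lagr f h g η.1 η.2)) x d d := by
  simp only [fderiv_fderiv_Lagr hf hh hg]
  fun_prop

theorem concaveOn_fderiv_fderiv_Lagr (hf : ContDiff ℝ 2 f) (hh : ∀ i, ContDiff ℝ 2 (h i))
    (hg : ∀ j, ContDiff ℝ 2 (g j)) (x d : Fin n → ℝ) {K : Set ((Fin m → ℝ) × (Fin p → ℝ))}
    (hK : Convex ℝ K) :
    ConcaveOn ℝ K fun η => fderiv ℝ (fderiv ℝ (Lagr f h g η.1 η.2)) x d d := by
  refine ⟨hK, fun η _ η' _ s t _ _ hst => le_of_eq ?_⟩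
  simp only [fderiv_fderiv_Lagr hf hh hg, _root_.add_apply, _root_.sum_apply, _root_.smul_apply,
    smul_eq_mul, Prod.fst_add, Prod.snd_add, Prod.smul_fst, Prod.smul_snd, Pi.add_apply,
    Pi.smul_apply, add_mul, Finset.sum_add_distrib, mul_assoc, ← Finset.mul_sum]
  linear_combination fderiv ℝ (fderiv ℝ f) x d d * hst

end MultiplierSet

section CriticalCone

variable {n m p : ℕ} {f : (Fin n → ℝ) → ℝ} {h : Fin m → (Fin n → ℝ) → ℝ}
  {g : Fin p → (Fin n → ℝ) → ℝ} {xs d : Fin n → ℝ} {lam : Fin m → ℝ} {mu : Fin p → ℝ}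

/-- The index `j` is strongly active: its constraint carries a non-zero component of some Lagrange
multiplier. It is then active by complementarity. -/
def IsStronglyActive (f : (Fin n → ℝ) → ℝ) (h : Fin m → (Fin n → ℝ) → ℝ)
    (g : Fin p → (Fin n → ℝ) → ℝ) (xs : Fin n → ℝ) (j : Fin p) : Prop :=
  ∃ η ∈ lagMultSet f h g xs, η.2 j ≠ 0

/-- The subspace on which all equality constraints and all strongly active inequality constraints
vanish to first order. It contains the critical cone. -/
def strongCritSub (f : (Fin n → ℝ) → ℝ) (h : Fin m → (Fin n → ℝ) → ℝ)
    (g : Fin p → (Fin n → ℝ) → ℝ) (xs : Fin n → ℝ) : Submodule ℝ (Fin n → ℝ) :=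
  (⨅ i, (fderiv ℝ (h i) xs).ker) ⊓
    ⨅ (j) (_ : IsStronglyActive f h g xs j), (fderiv ℝ (g j) xs).ker

theorem mem_strongCritSub : d ∈ strongCritSub f h g xs ↔ (∀ i, fderiv ℝ (h i) xs d = 0) ∧
    ∀ j, IsStronglyActive f h g xs j → fderiv ℝ (g j) xs d = 0 := by
  simp [strongCritSub]

theorem IsLagMult.mul_fderiv_eq_zero (hη : IsLagMult f h g xs lam mu)
    (hf : DifferentiableAt ℝ f xs) (hh : ∀ i, DifferentiableAt ℝ (h i) xs)
    (hg : ∀ j, DifferentiableAt ℝ (g j) xs) (hd : critCone f h g xs d) (j : Fin p) :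
    mu j * fderiv ℝ (g j) xs d = 0 := by
  have stationary := hη.fderiv_add_sum_eq_zero hf hh hg d
  simp only [hd.1, hd.2.1, mul_zero, Finset.sum_const_zero, zero_add] at stationary
  exact (Finset.sum_eq_zero_iff_of_nonpos fun j _ => hη.mul_fderiv_nonpos hd.2.2 j).1 stationary j
    (Finset.mem_univ j)

theorem critCone_iff_mem_strongCritSub (hΛ : (lagMultSet f h g xs).Nonempty)
    (hf : DifferentiableAt ℝ f xs) (hh : ∀ i, DifferentiableAt ℝ (h i) xs)
    (hg : ∀ j, DifferentiableAt ℝ (g j) xs) :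
    critCone f h g xs d ↔ d ∈ strongCritSub f h g xs ∧
      ∀ j, g j xs = 0 → ¬IsStronglyActive f h g xs j → fderiv ℝ (g j) xs d ≤ 0 := by
  rw [mem_strongCritSub]
  refine ⟨fun hd => ⟨⟨hd.2.1, fun j ⟨η, hη, hj⟩ => ?_⟩, fun j hj _ => hd.2.2 j hj⟩,
    fun ⟨⟨hd, gd⟩, gd'⟩ => ⟨?_, hd, fun j hj => ?_⟩⟩
  · exact (mul_eq_zero.1 (hη.mul_fderiv_eq_zero hf hh hg hd j)).resolve_left hj
  · obtain ⟨η, hη⟩ := hΛ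
    have complementary (j : Fin p) : η.2 j * fderiv ℝ (g j) xs d = 0 := by
      by_cases hj : η.2 j = 0
      · rw [hj, zero_mul]
      · rw [gd j ⟨η, hη, hj⟩, mul_zero]
    simpa [hd, complementary] using hη.fderiv_add_sum_eq_zero hf hh hg d
  · by_cases hstrong : IsStronglyActive f h g xs j
    · exact (gd j hstrong).le
    · exact gd' j hj hstrong

theorem GSCS.exists_dual_critCone_iff (hgscs : GSCS f h g xs)
    (hΛ : (lagMultSet f h g xs).Nonempty) (hf : DifferentiableAt ℝ f xs)
    (hh : ∀ i, DifferentiableAt ℝ (h i) xs) (hg : ∀ j, DifferentiableAt ℝ (g j) xs) :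
    ∃ ξ : Module.Dual ℝ (Fin n → ℝ),
      (∀ d, critCone f h g xs d ↔ d ∈ strongCritSub f h g xs ∧ ξ d ≤ 0) ∧
      ∀ d ∈ strongCritSub f h g xs, ξ d = 0 → critSub h g xs d := by
  have unique_weak : {j | g j xs = 0 ∧ ¬IsStronglyActive f h g xs j}.Subsingleton :=
    hgscs.anti fun j ⟨hj, hweak⟩ => ⟨hj, fun lam mu hη =>
      by_contra fun hmu => hweak ⟨(lam, mu), hη, hmu⟩⟩
  obtain ⟨ξ, hξ⟩ : ∃ ξ : Module.Dual ℝ (Fin n → ℝ), ∀ P : ℝ → Prop, P 0 → ∀ d, P (ξ d) ↔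
      ∀ j, g j xs = 0 → ¬IsStronglyActive f h g xs j → P (fderiv ℝ (g j) xs d) := by
    rcases unique_weak.eq_empty_or_singleton with hempty | ⟨j₀, hj₀⟩
    · exact ⟨0, fun P hP d =>
        ⟨fun _ j hj hweak => (hempty.le ⟨hj, hweak⟩ : j ∈ (∅ : Set _)).elim, fun _ => hP⟩⟩
    · have mem_weak (j) : (g j xs = 0 ∧ ¬IsStronglyActive f h g xs j) ↔ j = j₀ :=
        Set.ext_iff.1 hj₀ j
      refine ⟨fderiv ℝ (g j₀) xs, fun P _ d => ?_⟩
      simp only [← and_imp, mem_weak, forall_eq, ContinuousLinearMap.coe_coe]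
  refine ⟨ξ, fun d => ?_, fun d hd hξd => ⟨(mem_strongCritSub.1 hd).1, fun j hj => ?_⟩⟩
  · rw [critCone_iff_mem_strongCritSub hΛ hf hh hg, hξ (· ≤ 0) le_rfl]
  · by_cases hstrong : IsStronglyActive f h g xs j
    · exact (mem_strongCritSub.1 hd).2 j hstrong
    · exact (hξ (· = 0) rfl d).1 hξd j hj hstrong

end CriticalCone

section DiagonalFactorization

theorem mulVec_injective_of_pairwise_orthogonal_cols {ι κ : Type*} [Fintype ι] [Fintype κ]
    {M : Matrix ι κ ℝ} (hne : ∀ b, M.col b ≠ 0)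
    (horth : Pairwise fun a b => M.col a ⬝ᵥ M.col b = 0) : Function.Injective M.mulVec := by
  have gram : Mᵀ * M = diagonal fun b => M.col b ⬝ᵥ M.col b := by
    ext a b
    rcases eq_or_ne a b with rfl | hab
    · rw [diagonal_apply_eq]; rfl
    · rw [diagonal_apply_ne _ hab]; exact horth hab
  refine (injective_iff_map_eq_zero M.mulVecLin).2 fun y hy => funext fun b => ?_
  have gram_y : (Mᵀ * M) *ᵥ y = 0 := by
    rw [← mulVec_mulVec, ← mulVecLin_apply M, hy, mulVec_zero]
  rw [gram] at gram_y
  have := congrFun gram_y b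
  rw [mulVec_diagonal] at this
  exact (mul_eq_zero.1 this).resolve_left fun h0 => hne b (dotProduct_self_eq_zero.1 h0)

/-- A rectangular diagonal matrix all of whose diagonal entries vanish, except possibly the first
`r`: the shape of the factor `Σ(x)` of the smooth SVD where `J(x)` has rank `r`. -/
def IsDiagonalUpTo {M : Type*} [Zero M] {N n : ℕ} (r : ℕ) (S : Matrix (Fin N) (Fin n) M) : Prop :=
  ∀ i k, S i k ≠ 0 → (i : ℕ) = k ∧ (i : ℕ) < r

namespace IsDiagonalUpTo

variable {N n r : ℕ} {S : Matrix (Fin N) (Fin n) ℝ}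

theorem ne_zero_of_le_rank (hS : IsDiagonalUpTo r S) (hr : r ≤ S.rank) {i : Fin N} {k : Fin n}
    (hik : (i : ℕ) = k) (hi : (i : ℕ) < r) : S i k ≠ 0 := by
  intro h0
  have support_subset : Function.support S.row ⊆
      ((Finset.univ.filter fun i' : Fin N => (i' : ℕ) < r).erase i : Finset (Fin N)) := by
    intro i' hi'
    obtain ⟨k', hk'⟩ := Function.ne_iff.1 hi'
    obtain ⟨hik', hlt⟩ := hS i' k' hk'
    have : i' ≠ i := by
      rintro rfl
      exact hk' (by rwa [show k' = k from Fin.ext (hik'.symm.trans hik)])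
    simp [hlt, this]
  have card_lt := S.rank_le_card_of_support_subset _ support_subset
  rw [Finset.card_erase_of_mem (by simpa using hi), Fin.card_filter_val_lt] at card_lt
  omega

theorem apply_eq_zero_of_vecMul_eq_zero (hS : IsDiagonalUpTo r S) (hr : r ≤ S.rank)
    {α : Fin N → ℝ} (hα : α ᵥ* S = 0) {i : Fin N} {k : Fin n} (hik : (i : ℕ) = k)
    (hi : (i : ℕ) < r) : α i = 0 := by
  have entry : ∑ i', α i' * S i' k = 0 := congrFun hα k
  rw [Finset.sum_eq_single i] at entry
  · exact (mul_eq_zero.1 entry).resolve_right (hS.ne_zero_of_le_rank hr hik hi)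
  · intro i' _ hi'
    rw [not_ne_iff.1 (mt (hS i' k) fun h => hi' (Fin.ext (h.1.trans hik.symm))), mul_zero]
  · simp

theorem exists_sum_smul_eq {M : Type*} [AddCommGroup M] [Module ℝ M] (hS : IsDiagonalUpTo r S)
    (hr : r ≤ S.rank) {T : Matrix (Fin N) (Fin n) M} (hT : IsDiagonalUpTo (r + 1) T) :
    ∃ (ρ : Module.Dual ℝ (Fin N → ℝ)) (l : Module.Dual ℝ (Fin n → ℝ)) (w : M),
      ∀ α β, α ᵥ* S = 0 → ∑ i, ∑ k, (α i * β k) • T i k = (ρ α * l β) • w := by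
  have term_eq_zero {α : Fin N → ℝ} (hα : α ᵥ* S = 0) (β : Fin n → ℝ) {i : Fin N} {k : Fin n}
      (hik : ¬((i : ℕ) = r ∧ (k : ℕ) = r)) : (α i * β k) • T i k = 0 := by
    by_cases hTik : T i k = 0
    · rw [hTik, smul_zero]
    · obtain ⟨hdiag, hlt⟩ := hT i k hTik
      rw [hS.apply_eq_zero_of_vecMul_eq_zero hr hα hdiag (by omega), zero_mul, zero_smul]
  by_cases hlt : r < N ∧ r < n
  · refine ⟨LinearMap.proj ⟨r, hlt.1⟩, LinearMap.proj ⟨r, hlt.2⟩, T ⟨r, hlt.1⟩ ⟨r, hlt.2⟩,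
      fun α β hα => ?_⟩
    rw [Fintype.sum_eq_single ⟨r, hlt.1⟩, Fintype.sum_eq_single ⟨r, hlt.2⟩]
    · rfl
    · exact fun k hk => term_eq_zero hα β fun h => hk (Fin.ext h.2)
    · exact fun i hi => Finset.sum_eq_zero fun k _ =>
        term_eq_zero hα β fun h => hi (Fin.ext h.1)
  · refine ⟨0, 0, 0, fun α β hα => ?_⟩
    rw [smul_zero]
    exact Finset.sum_eq_zero fun i _ => Finset.sum_eq_zero fun k _ =>
      term_eq_zero hα β fun h => hlt ⟨h.1 ▸ i.2, h.2 ▸ k.2⟩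

variable {E : Type*} [NormedAddCommGroup E] [NormedSpace ℝ E] {x₀ : E}

theorem fderiv {S : E → Matrix (Fin N) (Fin n) ℝ}
    (hS : ∀ᶠ x in nhds x₀, IsDiagonalUpTo r (S x)) :
    IsDiagonalUpTo r (Matrix.of fun i k => fderiv ℝ (fun x => S x i k) x₀) := by
  intro i k hne
  by_contra hik
  have : (fun x => S x i k) =ᶠ[nhds x₀] fun _ => 0 :=
    hS.mono fun x hx => not_ne_iff.1 (mt (hx i k) hik)
  exact hne (by rw [of_apply, this.fderiv_eq, fderiv_fun_const, Pi.zero_apply])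

end IsDiagonalUpTo

variable {E : Type*} [NormedAddCommGroup E] [NormedSpace ℝ E] {x₀ : E}

theorem hasFDerivAt_dotProduct_mulVec_of_eq_zero {ι κ : Type*} [Fintype ι] [Fintype κ]
    {α : E → ι → ℝ} {β : E → κ → ℝ} {S : E → Matrix ι κ ℝ} (hα : DifferentiableAt ℝ α x₀)
    (hβ : DifferentiableAt ℝ β x₀) (hS : ∀ i k, DifferentiableAt ℝ (fun x => S x i k) x₀)
    (hleft : α x₀ ᵥ* S x₀ = 0) (hright : S x₀ *ᵥ β x₀ = 0) :
    HasFDerivAt (fun x => α x ⬝ᵥ (S x *ᵥ β x))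
      (∑ i, ∑ k, (α x₀ i * β x₀ k) • fderiv ℝ (fun x => S x i k) x₀) x₀ := by
  have hα' (i) := (differentiableAt_pi.1 hα i).hasFDerivAt
  have hβ' (k) := (differentiableAt_pi.1 hβ k).hasFDerivAt
  simp only [dotProduct, mulVec]
  refine (HasFDerivAt.fun_sum fun i _ => (hα' i).fun_mul
    (.fun_sum fun k _ => (hS i k).hasFDerivAt.fun_mul (hβ' k))).congr_fderiv ?_
  ext y
  have hleft' (k) : ∑ i, α x₀ i * S x₀ i k = 0 := congrFun hleft k
  have hright' (i) : ∑ k, S x₀ i k * β x₀ k = 0 := congrFun hright i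
  have left_terms : ∑ i, α x₀ i * ∑ k, S x₀ i k * fderiv ℝ (fun x => β x k) x₀ y = 0 := by
    simp only [Finset.mul_sum, ← mul_assoc]
    rw [Finset.sum_comm]
    simp only [← Finset.sum_mul, hleft', zero_mul, Finset.sum_const_zero]
  simp only [_root_.add_apply, _root_.sum_apply, _root_.smul_apply, smul_eq_mul, hright', zero_mul,
    Finset.sum_const_zero, add_zero, Finset.sum_add_distrib, mul_add, left_terms, zero_add]
  simp only [Finset.mul_sum, mul_assoc]

theorem exists_hasFDerivAt_dotProduct_mulVec {N n r : ℕ} {U : E → Matrix (Fin N) (Fin N) ℝ}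
    {S : E → Matrix (Fin N) (Fin n) ℝ} {V : E → Matrix (Fin n) (Fin n) ℝ}
    (hU : ∀ i j, DifferentiableAt ℝ (fun x => U x i j) x₀)
    (hS : ∀ i k, DifferentiableAt ℝ (fun x => S x i k) x₀)
    (hV : ∀ k k', DifferentiableAt ℝ (fun x => V x k k') x₀)
    (hUinj : Function.Injective (U x₀).mulVec) (hVinj : Function.Injective (V x₀).mulVec)
    (hdiag : IsDiagonalUpTo r (S x₀)) (hr : r ≤ (S x₀).rank)
    (hdiag' : ∀ᶠ x in nhds x₀, IsDiagonalUpTo (r + 1) (S x)) :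
    ∃ (ρ : Module.Dual ℝ (Fin N → ℝ)) (l : Module.Dual ℝ (Fin n → ℝ)) (w : E →L[ℝ] ℝ),
      ∀ η v, η ᵥ* (U x₀ * S x₀ * (V x₀)ᵀ) = 0 → (U x₀ * S x₀ * (V x₀)ᵀ) *ᵥ v = 0 →
        HasFDerivAt (fun x => η ⬝ᵥ ((U x * S x * (V x)ᵀ) *ᵥ v)) ((ρ η * l v) • w) x₀ := by
  obtain ⟨ρ, l, w, hsum⟩ := hdiag.exists_sum_smul_eq hr (IsDiagonalUpTo.fderiv hdiag')
  refine ⟨ρ ∘ₗ (U x₀).vecMulLinear, l ∘ₗ (V x₀)ᵀ.mulVecLin, w, fun η v hη hv => ?_⟩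
  have left : (η ᵥ* U x₀) ᵥ* S x₀ = 0 := hVinj <| by
    rw [← vecMul_transpose, vecMul_vecMul, vecMul_vecMul, ← Matrix.mul_assoc, hη, mulVec_zero]
  have right : S x₀ *ᵥ ((V x₀)ᵀ *ᵥ v) = 0 := hUinj <| by
    rw [mulVec_mulVec, mulVec_mulVec, hv, mulVec_zero]
  have factor : (fun x => η ⬝ᵥ ((U x * S x * (V x)ᵀ) *ᵥ v)) =
      fun x => (η ᵥ* U x) ⬝ᵥ (S x *ᵥ ((V x)ᵀ *ᵥ v)) := by
    simp only [dotProduct_mulVec, mulVec_mulVec, vecMul_vecMul, Matrix.mul_assoc]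
  rw [factor]
  refine (hasFDerivAt_dotProduct_mulVec_of_eq_zero (differentiableAt_pi.2 fun j => ?_)
    (differentiableAt_pi.2 fun k => ?_) hS left right).congr_fderiv (hsum _ _ left)
  · simp only [vecMul, dotProduct]
    fun_prop
  · simp only [mulVec, dotProduct, transpose_apply]
    fun_prop

end DiagonalFactorization

section SmoothJacobian

variable {n m p : ℕ} {f : (Fin n → ℝ) → ℝ} {h : Fin m → (Fin n → ℝ) → ℝ}
  {g : Fin p → (Fin n → ℝ) → ℝ} {xs : Fin n → ℝ}

theorem Jac_mulVec (x v : Fin n → ℝ) : Jac h g xs x *ᵥ v =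
    Sum.elim (fun i => fderiv ℝ (h i) x v)
      fun j : {j // g j xs = 0} => fderiv ℝ (g j) x v := by
  have apply_eq_sum (A : (Fin n → ℝ) →L[ℝ] ℝ) : ∑ k, A (Pi.single k 1) * v k = A v := by
    conv_rhs => rw [pi_eq_sum_univ' v]
    simp [mul_comm]
  funext i
  rcases i with i | j
  · exact apply_eq_sum (fderiv ℝ (h i) x)
  · exact apply_eq_sum (fderiv ℝ (g j) x)

theorem SmoothSVD.exists_hasFDerivAt_dotProduct_Jac_mulVec
    {e : (Fin m ⊕ {j : Fin p // g j xs = 0}) ≃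
      Fin (m + Fintype.card {j : Fin p // g j xs = 0})}
    (hsvd : SmoothSVD h g xs e)
    (hrank : ∀ᶠ x in nhds xs, (Jac h g xs x).rank ≤ (Jac h g xs xs).rank + 1) :
    ∃ (ρ : Module.Dual ℝ (Fin m ⊕ {j : Fin p // g j xs = 0} → ℝ))
      (l : Module.Dual ℝ (Fin n → ℝ)) (w : (Fin n → ℝ) →L[ℝ] ℝ),
      ∀ η v, η ᵥ* Jac h g xs xs = 0 → Jac h g xs xs *ᵥ v = 0 →
        HasFDerivAt (fun x => η ⬝ᵥ (Jac h g xs x *ᵥ v)) ((ρ η * l v) • w) xs := by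
  obtain ⟨O, hO, U, S, V, hU, hS, hV, hJ, hoff, htail, hUne, hUorth, hVne, hVorth⟩ := hsvd
  have isDiagonalUpTo {x} (hx : x ∈ O) : IsDiagonalUpTo (Jac h g xs x).rank (S x) :=
    fun i k hik => by
      have heq : (i : ℕ) = k := not_ne_iff.1 (mt (hoff x hx i k) hik)
      exact ⟨heq, not_le.1 (mt (htail x hx i k heq) hik)⟩
  have factor {x} (hx : x ∈ O) : (Jac h g xs x).submatrix e.symm id = U x * S x * (V x)ᵀ :=
    Matrix.ext (hJ x hx)
  have hxs : xs ∈ O := mem_of_mem_nhds hO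
  have rank_le : (Jac h g xs xs).rank ≤ (S xs).rank :=
    calc (Jac h g xs xs).rank = (U xs * S xs * (V xs)ᵀ).rank := by
          rw [← factor hxs]
          exact (rank_submatrix (Jac h g xs xs) e.symm (.refl _)).symm
      _ ≤ (S xs).rank := (rank_mul_le_left _ _).trans (rank_mul_le_right _ _)
  obtain ⟨ρ, l, w, hder⟩ := exists_hasFDerivAt_dotProduct_mulVec
    (fun i j => (hU i j).differentiableAt hO) (fun i j => (hS i j).differentiableAt hO)
    (fun i j => (hV i j).differentiableAt hO)
    (mulVec_injective_of_pairwise_orthogonal_cols hUne fun a b => hUorth a b)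
    (mulVec_injective_of_pairwise_orthogonal_cols hVne fun a b => hVorth a b)
    (isDiagonalUpTo hxs) rank_le (by
      filter_upwards [hO, hrank] with x hx hle i k hik
      exact (isDiagonalUpTo hx i k hik).imp_right (·.trans_le hle))
  refine ⟨ρ ∘ₗ LinearMap.funLeft ℝ ℝ e.symm, l, w, fun η v hη hv => ?_⟩
  have dotProduct_reindex {x} (hx : x ∈ O) :
      (η ∘ e.symm) ⬝ᵥ ((U x * S x * (V x)ᵀ) *ᵥ v) = η ⬝ᵥ (Jac h g xs x *ᵥ v) := by
    rw [← factor hx]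
    exact comp_equiv_dotProduct_comp_equiv η (Jac h g xs x *ᵥ v) e.symm
  refine (hder (η ∘ e.symm) v ?_ ?_).congr_of_eventuallyEq
    (Filter.mem_of_superset hO fun x hx => (dotProduct_reindex hx).symm)
  · rw [← factor hxs, ← hη]
    exact funext fun k => comp_equiv_dotProduct_comp_equiv η (fun i => Jac h g xs xs i k) e.symm
  · rw [← factor hxs]
    exact funext fun i => congrFun hv (e.symm i)

theorem fderiv_Lagr_sub_fderiv_Lagr {x : Fin n → ℝ} (hf : DifferentiableAt ℝ f x)
    (hh : ∀ i, DifferentiableAt ℝ (h i) x) (hg : ∀ j, DifferentiableAt ℝ (g j) x)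
    {lam lam' : Fin m → ℝ} {mu mu' : Fin p → ℝ} (hmu : ∀ j, g j xs ≠ 0 → mu j = mu' j)
    (v : Fin n → ℝ) :
    fderiv ℝ (Lagr f h g lam mu) x v - fderiv ℝ (Lagr f h g lam' mu') x v =
      Sum.elim (lam - lam') (fun j : {j // g j xs = 0} => mu j - mu' j) ⬝ᵥ
        (Jac h g xs x *ᵥ v) := by
  have active_sum : ∑ j : {j // g j xs = 0}, (mu j - mu' j) * fderiv ℝ (g j) x v =
      ∑ j, (mu j - mu' j) * fderiv ℝ (g j) x v := by
    refine Fintype.sum_of_injective _ Subtype.val_injective _ _ (fun j hj => ?_) fun _ => rfl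
    rw [hmu j fun hj' => hj ⟨⟨j, hj'⟩, rfl⟩, sub_self, zero_mul]
  rw [Jac_mulVec, sumElim_dotProduct_sumElim, dotProduct, dotProduct, active_sum,
    fderiv_Lagr hf hh hg, fderiv_Lagr hf hh hg]
  simp only [_root_.add_apply, _root_.sum_apply, _root_.smul_apply, smul_eq_mul, Pi.sub_apply,
    sub_mul, Finset.sum_sub_distrib]
  ring

theorem SmoothSVD.exists_fderiv_fderiv_Lagr_eq
    {e : (Fin m ⊕ {j : Fin p // g j xs = 0}) ≃
      Fin (m + Fintype.card {j : Fin p // g j xs = 0})}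
    (hsvd : SmoothSVD h g xs e)
    (hrank : ∀ᶠ x in nhds xs, (Jac h g xs x).rank ≤ (Jac h g xs xs).rank + 1)
    (hf : ContDiff ℝ 2 f) (hh : ∀ i, ContDiff ℝ 2 (h i)) (hg : ∀ j, ContDiff ℝ 2 (g j)) :
    ∃ (B : (Fin n → ℝ) → (Fin n → ℝ) → ℝ) (ρ : (Fin m → ℝ) × (Fin p → ℝ) → ℝ)
      (w l : Module.Dual ℝ (Fin n → ℝ)), ∀ η ∈ lagMultSet f h g xs, ∀ d v, critSub h g xs v →
        fderiv ℝ (fderiv ℝ (Lagr f h g η.1 η.2)) xs d v = B d v + ρ η * (w d * l v) := by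
  rcases (lagMultSet f h g xs).eq_empty_or_nonempty with hempty | ⟨η₀, hη₀⟩
  · exact ⟨0, 0, 0, 0, fun η hη => (hempty.le hη).elim⟩
  obtain ⟨ρ, l, w, hder⟩ := hsvd.exists_hasFDerivAt_dotProduct_Jac_mulVec hrank
  let diff (η : (Fin m → ℝ) × (Fin p → ℝ)) : Fin m ⊕ {j : Fin p // g j xs = 0} → ℝ :=
    Sum.elim (η.1 - η₀.1) fun j => η.2 j - η₀.2 j
  refine ⟨fun d v => fderiv ℝ (fderiv ℝ (Lagr f h g η₀.1 η₀.2)) xs d v, fun η => ρ (diff η), w, l,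
    fun η hη d v hv => ?_⟩
  have fderiv_sub (x v : Fin n → ℝ) : fderiv ℝ (Lagr f h g η.1 η.2) x v
      - fderiv ℝ (Lagr f h g η₀.1 η₀.2) x v = diff η ⬝ᵥ (Jac h g xs x *ᵥ v) :=
    fderiv_Lagr_sub_fderiv_Lagr (hf.differentiable two_ne_zero x)
      (fun i => (hh i).differentiable two_ne_zero x) (fun j => (hg j).differentiable two_ne_zero x)
      (fun j hj => (hη.eq_zero_of_ne_zero hj).trans (hη₀.eq_zero_of_ne_zero hj).symm) v
  have left_kernel : diff η ᵥ* Jac h g xs xs = 0 := dotProduct_eq_zero _ fun z => by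
    rw [← dotProduct_mulVec, ← fderiv_sub, hη.2.1, hη₀.2.1, sub_self]
  have right_kernel : Jac h g xs xs *ᵥ v = 0 := by
    rw [Jac_mulVec]
    exact funext (Sum.rec hv.1 fun j => hv.2 j j.2)
  have hasFDerivAt (η : (Fin m → ℝ) × (Fin p → ℝ)) :
      HasFDerivAt (fun x => fderiv ℝ (Lagr f h g η.1 η.2) x v)
        ((fderiv ℝ (fderiv ℝ (Lagr f h g η.1 η.2)) xs).flip v) xs := by
    have := ((contDiff_Lagr (lam := η.1) (mu := η.2) hf hh hg).fderiv_right
      (m := 1) le_rfl).differentiable one_ne_zero xs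
    simpa using this.hasFDerivAt.clm_apply (hasFDerivAt_const v xs)
  have derivative := hder (diff η) v left_kernel right_kernel
  simp only [← fderiv_sub] at derivative
  have := DFunLike.congr_fun (((hasFDerivAt η).sub (hasFDerivAt η₀)).unique derivative) d
  simp only [_root_.sub_apply, ContinuousLinearMap.flip_apply, _root_.smul_apply, smul_eq_mul]
    at this
  simp only [ContinuousLinearMap.coe_coe]
  linear_combination this

end SmoothJacobian

section ReducedHessian

variable {n m p : ℕ} {f : (Fin n → ℝ) → ℝ} {h : Fin m → (Fin n → ℝ) → ℝ}
  {g : Fin p → (Fin n → ℝ) → ℝ} {xs : Fin n → ℝ}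

/-- The Hessian at `xs` of the Lagrangian with multipliers `η = (λ, μ)`, as a bilinear form on the
subspace `strongCritSub`, of which the critical cone is a half-space under GSCS. -/
def reducedHess (f : (Fin n → ℝ) → ℝ) (h : Fin m → (Fin n → ℝ) → ℝ)
    (g : Fin p → (Fin n → ℝ) → ℝ) (xs : Fin n → ℝ) (η : (Fin m → ℝ) × (Fin p → ℝ)) :
    LinearMap.BilinForm ℝ (strongCritSub f h g xs) :=
  (fderiv ℝ (fderiv ℝ (Lagr f h g η.1 η.2)) xs).toBilinForm.restrict _

theorem isSymm_reducedHess (hf : ContDiff ℝ 2 f) (hh : ∀ i, ContDiff ℝ 2 (h i))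
    (hg : ∀ j, ContDiff ℝ 2 (g j)) (η : (Fin m → ℝ) × (Fin p → ℝ)) :
    (reducedHess f h g xs η).IsSymm :=
  ⟨fun d v => ((contDiff_Lagr hf hh hg).contDiffAt.isSymmSndFDerivAt (by simp)).eq d v⟩

theorem SmoothSVD.hasRankOneVariation_reducedHess
    {e : (Fin m ⊕ {j : Fin p // g j xs = 0}) ≃
      Fin (m + Fintype.card {j : Fin p // g j xs = 0})}
    (hsvd : SmoothSVD h g xs e)
    (hrank : ∀ᶠ x in nhds xs, (Jac h g xs x).rank ≤ (Jac h g xs xs).rank + 1)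
    (hf : ContDiff ℝ 2 f) (hh : ∀ i, ContDiff ℝ 2 (h i)) (hg : ∀ j, ContDiff ℝ 2 (g j))
    {ξ : Module.Dual ℝ (Fin n → ℝ)}
    (hξ : ∀ d ∈ strongCritSub f h g xs, ξ d = 0 → critSub h g xs d) :
    HasRankOneVariation (reducedHess f h g xs) (lagMultSet f h g xs)
      (ξ ∘ₗ (strongCritSub f h g xs).subtype) := by
  obtain ⟨B, ρ, w, l, hB⟩ := hsvd.exists_fderiv_fderiv_Lagr_eq hrank hf hh hg
  exact ⟨fun d v => B d v, ρ, w ∘ₗ Submodule.subtype _, l ∘ₗ Submodule.subtype _,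
    fun η hη d v hv => hB η hη d v (hξ v v.2 hv)⟩

theorem MFCQ.exists_reducedHess_nonneg (hmfcq : MFCQ h g xs) (hf : ContDiff ℝ 2 f)
    (hh : ∀ i, ContDiff ℝ 2 (h i)) (hg : ∀ j, ContDiff ℝ 2 (g j)) (hfeas : Feas h g xs)
    (hmin : IsLocalMinOn f {x | Feas h g x} xs) {ξ : Module.Dual ℝ (Fin n → ℝ)}
    (hξ : ∀ d ∈ strongCritSub f h g xs, ξ d ≤ 0 → critCone f h g xs d)
    (d : strongCritSub f h g xs) :
    ∃ η ∈ lagMultSet f h g xs, 0 ≤ reducedHess f h g xs η d d := by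
  have of_nonpos (d : strongCritSub f h g xs) (hd : ξ d ≤ 0) :
      ∃ η ∈ lagMultSet f h g xs, 0 ≤ reducedHess f h g xs η d d := by
    obtain ⟨lam, mu, hη, hpos⟩ :=
      hmfcq.exists_isLagMult_nonneg hf hh hg hfeas hmin (hξ d d.2 hd)
    exact ⟨(lam, mu), hη, hpos⟩
  rcases le_total (ξ d) 0 with hd | hd
  · exact of_nonpos d hd
  · simpa using of_nonpos (-d) (by simpa using hd)

end ReducedHessian

/-- MFCQ, rank of `J(x)` at most `r + 1` near `xs`, the smooth SVD assumption
and GSCS imply SSOC at a local minimizer. -/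
theorem stmt12 {n m p : ℕ} (f : (Fin n → ℝ) → ℝ) (h : Fin m → (Fin n → ℝ) → ℝ)
    (g : Fin p → (Fin n → ℝ) → ℝ)
    (hf : ContDiff ℝ 2 f) (hh : ∀ i, ContDiff ℝ 2 (h i)) (hg : ∀ j, ContDiff ℝ 2 (g j))
    (xs : Fin n → ℝ) (hfeas : Feas h g xs)
    (hmin : IsLocalMinOn f {x | Feas h g x} xs)
    (hmfcq : MFCQ h g xs)
    (hrank : ∀ᶠ x in nhds xs, (Jac h g xs x).rank ≤ (Jac h g xs xs).rank + 1)
    (e : (Fin m ⊕ {j : Fin p // g j xs = 0}) ≃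
      Fin (m + Fintype.card {j : Fin p // g j xs = 0}))
    (hsvd : SmoothSVD h g xs e)
    (hgscs : GSCS f h g xs) :
    ∃ (lam : Fin m → ℝ) (mu : Fin p → ℝ), IsLagMult f h g xs lam mu ∧
      ∀ d, critCone f h g xs d → 0 ≤ hessQ (Lagr f h g lam mu) xs d := by
  have hf₁ := hf.differentiable two_ne_zero xs
  have hh₁ i := (hh i).differentiable two_ne_zero xs
  have hg₁ j := (hg j).differentiable two_ne_zero xs
  have nonempty : (lagMultSet f h g xs).Nonempty := by
    obtain ⟨lam, mu, hη, -⟩ := hmfcq.exists_isLagMult_nonneg hf hh hg hfeas hmin (d := 0)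
      (by simp [critCone])
    exact ⟨(lam, mu), hη⟩
  obtain ⟨ξ, critCone_iff, critSub_of_ker⟩ :=
    hgscs.exists_dual_critCone_iff nonempty hf₁ hh₁ hg₁
  obtain ⟨⟨lam, mu⟩, hη, hpos⟩ :=
    (hsvd.hasRankOneVariation_reducedHess hrank hf hh hg critSub_of_ker).exists_mem_forall_nonneg
      (fun η _ => isSymm_reducedHess hf hh hg η) (hmfcq.isCompact_lagMultSet hf₁ hh₁ hg₁)
      (fun d => concaveOn_fderiv_fderiv_Lagr hf hh hg xs d (convex_lagMultSet hf₁ hh₁ hg₁))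
      (fun d => (continuous_fderiv_fderiv_Lagr hf hh hg xs d).upperSemicontinuous)
      (hmfcq.exists_reducedHess_nonneg hf hh hg hfeas hmin fun d hd hξ =>
        (critCone_iff d).2 ⟨hd, hξ⟩)
  refine ⟨lam, mu, hη, fun d hd => ?_⟩
  rw [hessQ_eq_fderiv_fderiv]
  exact hpos ⟨d, ((critCone_iff d).1 hd).1⟩
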